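/- Let G be a discrete group and let ∂_F G be a Furstenberg boundary of G. Then G is C*-simple if and only if the only G-equivariant u.c.p. map Φ : C*_λ(G) → C(∂_F G) is the map given by Φ(a) = τ_λ(a)·1 for all a ∈ C*_λ(G). -/

import Mathlib

noncomputable section
open scoped ENNReal ComplexOrder lp
open MeasureTheory
set_option maxHeartbeats 1000000
set_option synthInstance.maxHeartbeats 1000000

universe u

variable {G : Type u} [Group G]

theorem translat_mem (g : G) (f : ℓ²(G, ℂ)) : Memℓp (fun h => f (g⁻¹ * h)) 2 := by
  have hf : Summable fun i : G => ‖f i‖ ^ (2 : ℝ≥0∞).toReal :=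
    (memℓp_gen_iff (by norm_num)).1 (lp.memℓp f)
  exact memℓp_gen ((Equiv.mulLeft g⁻¹).summable_iff.2 hf)

/-- The left regular representation of `g ∈ G` as a linear isometric bijection of `ℓ²(G)`,
given by `(λ_g ξ)(h) = ξ(g⁻¹ h)`. -/
def lregE (g : G) : ℓ²(G, ℂ) ≃ₗᵢ[ℂ] ℓ²(G, ℂ) :=
{ toFun := fun f => ⟨fun h => f (g⁻¹ * h), translat_mem g f⟩
  invFun := fun f => ⟨fun h => f (g * h), by
    have := translat_mem g⁻¹ f; show Memℓp _ 2; simpa using this⟩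
  map_add' := by intro f₁ f₂; ext h; simp [lp.coeFn_add]; rfl
  map_smul' := by intro c f; ext h; simp [lp.coeFn_smul]
  left_inv := by intro f; ext h; simp
  right_inv := by intro f; ext h; simp
  norm_map' := by
    intro f
    rw [lp.norm_eq_tsum_rpow (by norm_num) f, lp.norm_eq_tsum_rpow (by norm_num)]
    congr 1
    exact (Equiv.mulLeft g⁻¹).tsum_eq (fun h => ‖f h‖ ^ (2 : ℝ≥0∞).toReal) }

/-- The left regular representation `λ` as bounded operators on `ℓ²(G)`. -/
def lreg (g : G) : ℓ²(G, ℂ) →L[ℂ] ℓ²(G, ℂ) :=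
  (lregE g).toContinuousLinearEquiv.toContinuousLinearMap

variable (G) in
/-- The reduced group C*-algebra `C*_λ(G)`: the norm-closed star subalgebra of the algebra of
bounded operators on `ℓ²(G)` generated by the image of the left regular representation. -/
def redCstar : StarSubalgebra ℂ (ℓ²(G, ℂ) →L[ℂ] ℓ²(G, ℂ)) :=
  (StarAlgebra.adjoin ℂ (Set.range (lreg (G := G)))).topologicalClosure

/-- `λ_g` as an element of the reduced group C*-algebra. -/
def uu (g : G) : redCstar G :=
  ⟨lreg g, StarSubalgebra.le_topologicalClosure _ (StarAlgebra.subset_adjoin ℂ _ ⟨g, rfl⟩)⟩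

variable (G) in
/-- `G` is C*-simple: `C*_λ(G)` has no closed two-sided ideals other than `{0}` and the
whole algebra. -/
def IsCstarSimple : Prop :=
  ∀ I : TwoSidedIdeal (redCstar G), IsClosed (I : Set (redCstar G)) → I = ⊥ ∨ I = ⊤

/-- The vector `δ_e ∈ ℓ²(G)`. -/
def deltaOne : ℓ²(G, ℂ) := letI := Classical.decEq G; lp.single 2 (1 : G) 1

variable (G) in
/-- The canonical tracial state `τ_λ(a) = ⟨a δ_e, δ_e⟩` on the reduced C*-algebra
(as a scalar-valued function). -/
def tauF (a : redCstar G) : ℂ :=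
  inner (𝕜 := ℂ) (deltaOne (G := G)) ((a : ℓ²(G, ℂ) →L[ℂ] ℓ²(G, ℂ)) (deltaOne (G := G)))

attribute [irreducible] redCstar lreg lregE deltaOne uu tauF

/-- `X` is a `G`-boundary: a nonempty compact Hausdorff `G`-space such that for every regular
Borel probability measure `μ` on `X` and every `x ∈ X`, the point mass `δ_x` lies in the
weak* closure of the orbit `Gμ`. -/
def IsBoundary (G X : Type*) [Group G] [TopologicalSpace X] [CompactSpace X] [T2Space X]
    [MulAction G X] [ContinuousConstSMul G X] : Prop :=
  Nonempty X ∧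
  letI : MeasurableSpace X := borel X
  haveI : BorelSpace X := ⟨rfl⟩
  ∀ (μ : ProbabilityMeasure X) (x : X),
    (⟨Measure.dirac x, Measure.dirac.isProbabilityMeasure⟩ : ProbabilityMeasure X) ∈
      closure {ν : ProbabilityMeasure X |
        ∃ g : G, ν = μ.map ((continuous_const_smul g).measurable.aemeasurable (μ := μ.toMeasure))
          (f := (g • ·))}

/-- `Y` is a Furstenberg boundary of `G`: a `G`-boundary admitting a continuous `G`-equivariant
surjection onto every `G`-boundary. -/
def IsFurstenberg (G Y : Type u) [Group G] [TopologicalSpace Y] [CompactSpace Y] [T2Space Y]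
    [MulAction G Y] [ContinuousConstSMul G Y] : Prop :=
  IsBoundary G Y ∧
  ∀ (X : Type u) (iT : TopologicalSpace X) (iC : @CompactSpace X iT) (iH : @T2Space X iT)
    (iM : MulAction G X) (iS : @ContinuousConstSMul G X iT iM.toSMul),
    @IsBoundary G X _ iT iC iH iM iS →
      ∃ q : Y → X, @Continuous _ _ _ iT q ∧ Function.Surjective q ∧
        ∀ (g : G) (y : Y), q (g • y) = g • q y

/-- A linear map into `C(Y, ℂ)` is unital completely positive: it is unital and its entrywise
extensions to matrix algebras map positive elements to positive elements. -/
def IsUCP {Y : Type u} [TopologicalSpace Y] (Φ : redCstar G →L[ℂ] C(Y, ℂ)) : Prop :=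
  Φ 1 = 1 ∧ ∀ (n : ℕ) (M : Matrix (Fin n) (Fin n) (redCstar G)),
    (∃ N : Matrix (Fin n) (Fin n) (redCstar G), M = star N * N) →
      ∃ P : Matrix (Fin n) (Fin n) C(Y, ℂ), M.map Φ = star P * P

/-- `G`-equivariance of a map `C*_λ(G) → C(Y)`, for the conjugation action on `C*_λ(G)` and
the translation action on `C(Y)`: `Φ(λ_g a λ_g⁻¹)(y) = Φ(a)(g⁻¹ y)`. -/
def IsEquivariant {Y : Type u} [TopologicalSpace Y] [MulAction G Y]
    (Φ : redCstar G →L[ℂ] C(Y, ℂ)) : Prop :=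
  ∀ (g : G) (a : redCstar G) (y : Y), Φ (uu g * a * uu g⁻¹) y = Φ a (g⁻¹ • y)

/-!
A proper ideal of `C*_λ(G)` is annihilated by some state. The Furstenberg boundary maps
equivariantly into every compact convex `G`-set `K`, because the closure of the extreme points of
a minimal closed convex invariant subset of `K` is a `G`-boundary. Applied to the states
annihilating the ideal, this yields an equivariant u.c.p. map to `C(∂_F G)` that vanishes on the
ideal; if the only such map is the trace, the ideal is zero, as the trace is faithful.

Conversely, let `C*_λ(G)` be simple and extend an equivariant u.c.p. map `Φ` to an equivariant
field of states `ψ` on `B(ℓ²(G))`. Equivariant fields of states on `C(∂_F G)` are rigid, so `ψ y`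
restricts to evaluation at `y` on the copy of `C(∂_F G)` acting along any orbit, and
`Φ(λ_s)(y) ≠ 0` forces `s` to fix a neighbourhood of `y` pointwise. Moreover `ψ y` restricts to a
mean on `ℓ^∞(G)` invariant under the stabilizer of `y`, so by Day's convexity argument the
representation of `G` on `ℓ²(Gy)` is weakly contained in `λ`, and by simplicity `C*_λ(G)` embeds
in `B(ℓ²(Gy))`. The trace now extends to an equivariant field of states on `B(ℓ²(Gy))`, again
evaluating at points on functions. A function concentrated where `s` acts trivially gives
`τ_λ(λ_s) = 1`, hence `s = e`.
-/

section Convexity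

variable {V : Type*} [AddCommGroup V] [Module ℝ V] [TopologicalSpace V]

theorem exists_barycenter_mem [T2Space V] {K : Set V} (hK : IsCompact K) (hKc : Convex ℝ K)
    {X : Type*} [MeasurableSpace X] (μ : Measure X) [IsProbabilityMeasure μ] {z : X → V}
    (hz : ∀ x, z x ∈ K) (hint : ∀ l : V →L[ℝ] ℝ, Integrable (fun x => l (z x)) μ) :
    ∃ b ∈ K, ∀ l : V →L[ℝ] ℝ, l b = ∫ x, l (z x) ∂μ := by
  obtain ⟨b, hb, hbl⟩ := hK.inter_iInter_nonempty
    (fun l : V →L[ℝ] ℝ => {b | l b = ∫ x, l (z x) ∂μ})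
    (fun l => isClosed_eq l.continuous continuous_const) (fun F => by
      let L : V →L[ℝ] F → ℝ := ContinuousLinearMap.pi fun l => l.1
      have hL : Integrable (fun x => L (z x)) μ := Integrable.of_eval fun l => hint l.1
      obtain ⟨b, hb, hbL⟩ := (hKc.is_linear_image L.toLinearMap.isLinear).integral_mem
        (hK.image L.continuous).isClosed
        (Filter.Eventually.of_forall fun x => Set.mem_image_of_mem L (hz x)) hL
      exact ⟨b, hb, Set.mem_iInter₂.2 fun l hl => (congrFun hbL ⟨l, hl⟩).trans
        (eval_integral (fun l : F => hint l.1) ⟨l, hl⟩)⟩)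
  exact ⟨b, hb, Set.mem_iInter.1 hbl⟩

variable [IsTopologicalAddGroup V] [ContinuousSMul ℝ V]

theorem isCompact_convexJoin {s t : Set V} (hs : IsCompact s) (ht : IsCompact t) :
    IsCompact (convexJoin ℝ s t) := by
  have himage : convexJoin ℝ s t =
      (fun p : ℝ × V × V => (1 - p.1) • p.2.1 + p.1 • p.2.2) '' (Set.Icc 0 1 ×ˢ s ×ˢ t) := by
    ext z
    simp only [mem_convexJoin, segment_eq_image, Set.mem_image, Set.mem_prod, Prod.exists]
    constructor
    · rintro ⟨a, ha, b, hb, r, hr, rfl⟩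
      exact ⟨r, a, b, ⟨hr, ha, hb⟩, rfl⟩
    · rintro ⟨r, a, b, ⟨hr, ha, hb⟩, rfl⟩
      exact ⟨a, ha, b, hb, r, hr, rfl⟩
  rw [himage]
  exact (isCompact_Icc.prod (hs.prod ht)).image (by fun_prop)

theorem isCompact_convexHull_union {s t : Set V} (hs : IsCompact (convexHull ℝ s))
    (ht : IsCompact (convexHull ℝ t)) : IsCompact (convexHull ℝ (s ∪ t)) := by
  rcases s.eq_empty_or_nonempty with rfl | hs'
  · rwa [Set.empty_union]
  rcases t.eq_empty_or_nonempty with rfl | ht'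
  · rwa [Set.union_empty]
  rw [convexHull_union hs' ht']
  exact isCompact_convexJoin hs ht

theorem isCompact_convexHull_biUnion {ι : Type*} (s : Finset ι) {C : ι → Set V}
    (hcompact : ∀ i, IsCompact (C i)) (hconvex : ∀ i, Convex ℝ (C i)) :
    IsCompact (convexHull ℝ (⋃ i ∈ s, C i)) := by
  classical
  induction s using Finset.induction_on with
  | empty => simp
  | insert i s _ ih =>
    rw [Finset.set_biUnion_insert]
    exact isCompact_convexHull_union ((hconvex i).convexHull_eq.symm ▸ hcompact i) ih

/- The part of `K` outside `W` is covered by finitely many half-spaces missing `x`; the convex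
hull of their traces on `K` is compact and, `x` being extreme, still misses `x`. -/
theorem exists_slice_subset_of_mem_extremePoints [LocallyConvexSpace ℝ V] [T2Space V]
    {K W : Set V} (hK : IsCompact K) (hKc : Convex ℝ K) {x : V} (hx : x ∈ K.extremePoints ℝ)
    (hW : IsOpen W) (hxW : x ∈ W) :
    ∃ (l : V →L[ℝ] ℝ) (c : ℝ), (∃ z ∈ K, c < l z) ∧ ∀ z ∈ K, c < l z → z ∈ W := by
  have hsep : ∀ t : ↥(K \ W), ∃ (l : V →L[ℝ] ℝ) (c : ℝ), l x < c ∧ c < l t := fun t =>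
    have ⟨f, hf⟩ := geometric_hahn_banach_point_point (E := V)
      (fun h : x = t => t.2.2 (h ▸ hxW))
    ⟨f, exists_between hf⟩
  choose l c hlx hlt using hsep
  obtain ⟨s, hs⟩ := (hK.diff hW).elim_finite_subcover (fun t => {z | c t < l t z})
    (fun t => isOpen_lt continuous_const (l t).continuous)
    (fun t ht => Set.mem_iUnion.2 ⟨⟨t, ht⟩, hlt ⟨t, ht⟩⟩)
  let C : ↥(K \ W) → Set V := fun t => K ∩ {z | c t ≤ l t z}
  have hN : IsCompact (convexHull ℝ (⋃ t ∈ s, C t)) := isCompact_convexHull_biUnion s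
    (fun t => hK.inter_right (isClosed_le continuous_const (l t).continuous))
    (fun t => hKc.inter (convex_halfSpace_ge (l t).toLinearMap.isLinear _))
  have hC : ∀ t, C t ⊆ K \ {x} := by
    rintro t z ⟨hz, hcz⟩
    exact ⟨hz, fun hzx : z = x => (hlx t).not_ge (hzx ▸ hcz)⟩
  have hxN : x ∉ convexHull ℝ (⋃ t ∈ s, C t) := fun h =>
    (convexHull_min (Set.iUnion₂_subset fun t _ => hC t)
      (hKc.mem_extremePoints_iff_convex_sdiff.1 hx).2 h).2 rfl
  obtain ⟨f, u, hfN, hfx⟩ :=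
    geometric_hahn_banach_closed_point (convex_convexHull ℝ _) hN.isClosed hxN
  refine ⟨f, u, ⟨x, hx.1, hfx⟩, fun z hz hzu => by_contra fun hzW => ?_⟩
  obtain ⟨t, ht, htz⟩ := Set.mem_iUnion₂.1 (hs ⟨hz, hzW⟩)
  have hzC : z ∈ C t := ⟨hz, (show c t < l t z from htz).le⟩
  exact (hfN z (subset_convexHull ℝ _ (Set.mem_biUnion ht hzC))).not_gt hzu

end Convexity

theorem measureReal_le_of_le_integral {X : Type*} [MeasurableSpace X] {μ : Measure X}
    [IsProbabilityMeasure μ] {f : X → ℝ} (hf : Integrable f μ) {M c ε : ℝ} (hcM : c < M)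
    (hfM : ∀ x, f x ≤ M) (hint : M - ε * (M - c) ≤ ∫ x, f x ∂μ) :
    μ.real {x | f x ≤ c} ≤ ε := by
  have hmarkov := mul_meas_ge_le_integral_of_nonneg (μ := μ) (f := fun x => M - f x)
    (Filter.Eventually.of_forall fun x => sub_nonneg.2 (hfM x))
    ((integrable_const M).sub hf) (M - c)
  rw [integral_sub (integrable_const M) hf, integral_const, probReal_univ, one_smul] at hmarkov
  simp only [sub_le_sub_iff_left] at hmarkov
  exact le_of_mul_le_mul_left (hmarkov.trans (by linarith)) (sub_pos.2 hcM)

section CompactConvexGSets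

variable {V : Type*} [AddCommGroup V] [Module ℝ V] [TopologicalSpace V]

/-- A nonempty compact convex subset of `V`, invariant under the linear action `ρ` of `G`. -/
structure IsCompactConvexGSet (ρ : G →* (V →L[ℝ] V)) (K : Set V) : Prop where
  nonempty : K.Nonempty
  isCompact : IsCompact K
  convex : Convex ℝ K
  mapsTo : ∀ g, Set.MapsTo (ρ g) K K

variable {ρ : G →* (V →L[ℝ] V)} {K : Set V}

theorem IsCompactConvexGSet.exists_minimal [T2Space V] (hK : IsCompactConvexGSet ρ K) :
    ∃ M ⊆ K, Minimal (IsCompactConvexGSet ρ) M := by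
  obtain ⟨M, hMK, hM⟩ := zorn_superset_nonempty {L | L ⊆ K ∧ IsCompactConvexGSet ρ L} (by
    intro c hc hchain hne
    have : Nonempty c := hne.to_subtype
    obtain ⟨L, hL⟩ := hne
    have hclosed : ∀ s ∈ c, IsClosed s := fun s hs => (hc hs).2.isCompact.isClosed
    refine ⟨⋂₀ c, ⟨(Set.sInter_subset_of_mem hL).trans (hc hL).1, ?_, ?_, ?_, ?_⟩,
      fun s hs => Set.sInter_subset_of_mem hs⟩
    · rw [Set.sInter_eq_iInter]
      exact IsCompact.nonempty_iInter_of_directed_nonempty_isCompact_isClosed _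
        (fun s t => (hchain.total s.2 t.2).elim (fun h => ⟨s, le_rfl, h⟩) fun h => ⟨t, h, le_rfl⟩)
        (fun s => (hc s.2).2.nonempty) (fun s => (hc s.2).2.isCompact) (fun s => hclosed s s.2)
    · exact hK.isCompact.of_isClosed_subset (isClosed_sInter hclosed)
        ((Set.sInter_subset_of_mem hL).trans (hc hL).1)
    · exact convex_sInter fun s hs => (hc hs).2.convex
    · exact fun g v hv s hs => (hc hs).2.mapsTo g (hv s hs)) K ⟨le_rfl, hK⟩
  exact ⟨M, hMK, hM.prop.2, fun L hL hLM => hM.le_of_le ⟨hLM.trans hMK, hL⟩ hLM⟩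

theorem IsCompactConvexGSet.mapsTo_extremePoints (hK : IsCompactConvexGSet ρ K) (g : G) :
    Set.MapsTo (ρ g) (K.extremePoints ℝ) (K.extremePoints ℝ) := by
  intro x hx
  have hinv : ∀ (h : G) v, ρ h⁻¹ (ρ h v) = v := fun h v => by
    rw [← mul_apply_eq_comp, ← map_mul, inv_mul_cancel, map_one, one_apply_eq_self]
  have hpreimage : K \ {ρ g x} = ρ g⁻¹ ⁻¹' (K \ {x}) := by
    ext y
    have hy : ρ g (ρ g⁻¹ y) = y := by simpa using hinv g⁻¹ y
    refine and_congr ⟨fun h => hK.mapsTo _ h, fun h => hy ▸ hK.mapsTo g h⟩ (not_congr ?_)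
    exact ⟨fun h : y = ρ g x => (congrArg _ h).trans (hinv g x),
      fun h : ρ g⁻¹ y = x => hy.symm.trans (congrArg _ h)⟩
  rw [hK.convex.mem_extremePoints_iff_convex_sdiff] at hx ⊢
  exact ⟨hK.mapsTo g hx.1, hpreimage ▸ hx.2.linear_preimage (ρ g⁻¹).toLinearMap⟩

theorem exists_lt_apply_of_minimal [T2Space V] (hK : Minimal (IsCompactConvexGSet ρ) K) {b z : V}
    (hb : b ∈ K) (hz : z ∈ K) (l : V →L[ℝ] ℝ) {r : ℝ} (hr : r < l z) : ∃ g, r < l (ρ g b) := by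
  by_contra! hcon
  have hL : IsCompactConvexGSet ρ (K ∩ ⋂ g, {v | l (ρ g v) ≤ r}) := by
    refine ⟨⟨b, hb, Set.mem_iInter.2 hcon⟩, ?_, ?_, ?_⟩
    · exact hK.prop.isCompact.inter_right
        (isClosed_iInter fun g => isClosed_le (l.comp (ρ g)).continuous continuous_const)
    · exact hK.prop.convex.inter
        (convex_iInter fun g => convex_halfSpace_le (l.comp (ρ g)).toLinearMap.isLinear r)
    · refine fun g v hv => ⟨hK.prop.mapsTo g hv.1, Set.mem_iInter.2 fun h => ?_⟩
      have hvr : l (ρ (h * g) v) ≤ r := Set.mem_iInter.1 hv.2 (h * g)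
      rwa [map_mul] at hvr
  have hzr : l (ρ 1 z) ≤ r := Set.mem_iInter.1 (hK.le_of_le hL Set.inter_subset_left hz).2 1
  rw [map_one] at hzr
  exact hr.not_ge hzr

variable [IsTopologicalAddGroup V] [ContinuousSMul ℝ V] [LocallyConvexSpace ℝ V] [T2Space V]

/- Some translate of the barycenter of `μ` almost maximizes the functional defining a slice of `K`
inside `W`, so by Markov's inequality the translate of `μ` almost lives in that slice. -/
theorem exists_measureReal_notMem_le_of_minimal (hK : Minimal (IsCompactConvexGSet ρ) K)
    {X : Type*} [MeasurableSpace X] (μ : Measure X) [IsProbabilityMeasure μ] {z : X → V}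
    (hz : ∀ x, z x ∈ K) (hint : ∀ l : V →L[ℝ] ℝ, Integrable (fun x => l (z x)) μ) {W : Set V}
    (hW : IsOpen W) (hWK : (closure (K.extremePoints ℝ) ∩ W).Nonempty) {ε : ℝ} (hε : 0 < ε) :
    ∃ g, μ.real {x | ρ g (z x) ∉ W} ≤ ε := by
  have hKcompact := hK.prop.isCompact
  obtain ⟨x, hx, hxW⟩ := hWK
  obtain ⟨x', hx'W, hx'⟩ := mem_closure_iff.1 hx W hW hxW
  obtain ⟨l, c, ⟨z₁, hz₁, hcz₁⟩, hslice⟩ :=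
    exists_slice_subset_of_mem_extremePoints hKcompact hK.prop.convex hx' hW hx'W
  obtain ⟨z₀, hz₀, hmax⟩ :=
    hKcompact.exists_isMaxOn hK.prop.nonempty l.continuous.continuousOn
  have hcz₀ : c < l z₀ := hcz₁.trans_le (hmax hz₁)
  obtain ⟨b, hb, hbl⟩ := exists_barycenter_mem hKcompact hK.prop.convex μ hz hint
  obtain ⟨g, hg⟩ := exists_lt_apply_of_minimal hK hb hz₀ l
    (sub_lt_self (l z₀) (mul_pos hε (sub_pos.2 hcz₀)))
  have hgz : ∀ x, ρ g (z x) ∈ K := fun x => hK.prop.mapsTo g (hz x)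
  refine ⟨g, (measureReal_mono fun x hx => ?_).trans
    (measureReal_le_of_le_integral (hint (l.comp (ρ g))) hcz₀ (fun x => hmax (hgz x))
      (hbl (l.comp (ρ g)) ▸ hg.le))⟩
  exact not_lt.1 fun h => hx (hslice _ (hgz x) h)

end CompactConvexGSets

section Boundary

theorem norm_integral_sub_le_of_forall_mem {X : Type*} [TopologicalSpace X] [MeasurableSpace X]
    [OpensMeasurableSpace X] (ν : Measure X) [IsProbabilityMeasure ν]
    (f : BoundedContinuousFunction X ℝ) {x : X} {W : Set X} (hW : MeasurableSet W) (hxW : x ∈ W)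
    {ε : ℝ} (hf : ∀ y ∈ W, ‖f y - f x‖ ≤ ε) :
    ‖∫ y, f y ∂ν - f x‖ ≤ ε + ν.real Wᶜ * (2 * ‖f‖) := by
  have hε : 0 ≤ ε := (norm_nonneg _).trans (hf x hxW)
  have hint : Integrable (Wᶜ.indicator fun _ => 2 * ‖f‖) ν :=
    (integrable_const _).indicator hW.compl
  have hbound : ∀ y, ‖f y - f x‖ ≤ ε + Wᶜ.indicator (fun _ => 2 * ‖f‖) y := fun y => by
    by_cases hy : y ∈ W
    · rw [Set.indicator_of_notMem (Set.notMem_compl_iff.2 hy), add_zero]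
      exact hf y hy
    · rw [Set.indicator_of_mem (Set.mem_compl hy), ← dist_eq_norm]
      exact (f.dist_le_two_norm y x).trans (le_add_of_nonneg_left hε)
  calc ‖∫ y, f y ∂ν - f x‖ = ‖∫ y, (f y - f x) ∂ν‖ := by
        rw [integral_sub (f.integrable ν) (integrable_const _), integral_const, probReal_univ,
          one_smul]
    _ ≤ ∫ y, (ε + Wᶜ.indicator (fun _ => 2 * ‖f‖) y) ∂ν :=
        norm_integral_le_of_norm_le ((integrable_const ε).add hint)
          (Filter.Eventually.of_forall hbound)
    _ = ε + ν.real Wᶜ * (2 * ‖f‖) := by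
        rw [integral_add (integrable_const ε) hint, integral_indicator_const _ hW.compl,
          integral_const, probReal_univ, one_smul, smul_eq_mul]

theorem diracProba_mem_closure {X : Type*} [TopologicalSpace X] [MeasurableSpace X]
    [OpensMeasurableSpace X] {x : X} {S : Set (ProbabilityMeasure X)}
    (hS : ∀ W, IsOpen W → x ∈ W → ∀ ε : ℝ, 0 < ε → ∃ ν ∈ S, (ν : Measure X).real Wᶜ ≤ ε) :
    diracProba x ∈ closure S := by
  choose ν hνS hν using fun p : (TopologicalSpace.OpenNhdsOf x)ᵒᵈ × ℕ =>
    hS _ (OrderDual.ofDual p.1).isOpen (OrderDual.ofDual p.1).mem (1 / ((p.2 : ℝ) + 1))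
      Nat.one_div_pos_of_nat
  refine mem_closure_of_tendsto (ProbabilityMeasure.tendsto_iff_forall_integral_tendsto.2
    fun f => ?_) (Filter.Eventually.of_forall hνS) (b := Filter.atTop)
  have hdirac : ∫ y, f y ∂(diracProba x : Measure X) = f x :=
    integral_dirac' _ _ f.continuous.stronglyMeasurable
  rw [hdirac, Metric.tendsto_nhds]
  intro δ hδ
  let W : TopologicalSpace.OpenNhdsOf x :=
    ⟨⟨{y | ‖f y - f x‖ < δ / 2}, isOpen_lt (by fun_prop) continuous_const⟩, by simp [hδ]⟩
  have hlim : Filter.Tendsto (fun n : ℕ => 1 / ((n : ℝ) + 1) * (2 * ‖f‖)) Filter.atTop (nhds 0) :=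
    by simpa using tendsto_one_div_add_atTop_nhds_zero_nat.mul_const (2 * ‖f‖)
  rw [← Filter.prod_atTop_atTop_eq]
  filter_upwards [(Filter.eventually_ge_atTop (OrderDual.toDual W)).prod_mk
    (hlim.eventually_lt_const (half_pos hδ))] with p ⟨hpW, hpn⟩
  let U : TopologicalSpace.OpenNhdsOf x := OrderDual.ofDual p.1
  calc dist (∫ y, f y ∂(ν p : Measure X)) (f x)
      ≤ δ / 2 + (ν p : Measure X).real (U : Set X)ᶜ * (2 * ‖f‖) :=
        norm_integral_sub_le_of_forall_mem _ f U.isOpen.measurableSet U.mem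
          fun y hy => (show ‖f y - f x‖ < δ / 2 from hpW hy).le
    _ ≤ δ / 2 + 1 / ((p.2 : ℝ) + 1) * (2 * ‖f‖) := by gcongr; exact hν p
    _ < δ := by linarith

theorem isBoundary_of_forall_exists_measureReal_le {X : Type*} [TopologicalSpace X]
    [CompactSpace X] [T2Space X] [MulAction G X] [ContinuousConstSMul G X] [Nonempty X]
    (h : let _ : MeasurableSpace X := borel X
      ∀ (μ : Measure X) [IsProbabilityMeasure μ] (x : X) (W : Set X), IsOpen W → x ∈ W →
        ∀ ε : ℝ, 0 < ε → ∃ g : G, μ.real {y | g • y ∉ W} ≤ ε) : IsBoundary G X := by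
  let _ : MeasurableSpace X := borel X
  have : BorelSpace X := ⟨rfl⟩
  refine ⟨inferInstance, fun μ x => diracProba_mem_closure fun W hW hxW ε hε => ?_⟩
  obtain ⟨g, hg⟩ := h (μ : Measure X) x W hW hxW ε hε
  have hgm : Measurable fun y : X => g • y := (continuous_const_smul g).measurable
  refine ⟨μ.map hgm.aemeasurable, ⟨g, rfl⟩, ?_⟩
  rwa [ProbabilityMeasure.toMeasure_map, map_measureReal_apply hgm hW.measurableSet.compl]

/-- The action of `G` on a subset `s` of `V` invariant under the linear action `ρ`. -/
abbrev invariantMulAction {V : Type*} [AddCommGroup V] [Module ℝ V] [TopologicalSpace V]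
    (ρ : G →* (V →L[ℝ] V)) {s : Set V} (hs : ∀ g, Set.MapsTo (ρ g) s s) : MulAction G s where
  smul g := (hs g).restrict
  one_smul x := Subtype.ext (by change ρ 1 x.1 = x.1; rw [map_one, one_apply_eq_self])
  mul_smul g h x := Subtype.ext
    (by change ρ (g * h) x.1 = ρ g (ρ h x.1); rw [map_mul, mul_apply_eq_comp])

variable {V : Type u} [AddCommGroup V] [Module ℝ V] [TopologicalSpace V]
  [IsTopologicalAddGroup V] [ContinuousSMul ℝ V] [LocallyConvexSpace ℝ V] [T2Space V]
  {ρ : G →* (V →L[ℝ] V)} {K : Set V}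

/- The boundary mapped to is the closure of the extreme points of a minimal compact convex
`G`-subset of `K`. -/
theorem IsFurstenberg.exists_equivariant_map {Y : Type u} [TopologicalSpace Y] [CompactSpace Y]
    [T2Space Y] [MulAction G Y] [ContinuousConstSMul G Y] (hY : IsFurstenberg G Y)
    (hK : IsCompactConvexGSet ρ K) :
    ∃ q : Y → V, Continuous q ∧ (∀ y, q y ∈ K) ∧ ∀ (g : G) y, q (g • y) = ρ g (q y) := by
  obtain ⟨M, hMK, hM⟩ := hK.exists_minimal
  have hXM : closure (M.extremePoints ℝ) ⊆ M :=
    closure_minimal extremePoints_subset hM.prop.isCompact.isClosed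
  have hX : ∀ g, Set.MapsTo (ρ g) (closure (M.extremePoints ℝ)) (closure (M.extremePoints ℝ)) :=
    fun g => (hM.prop.mapsTo_extremePoints g).closure (ρ g).continuous
  let _ : MulAction G (closure (M.extremePoints ℝ)) := invariantMulAction ρ hX
  have : ContinuousConstSMul G (closure (M.extremePoints ℝ)) :=
    ⟨fun g => (ρ g).continuous.restrict (hX g)⟩
  have : CompactSpace (closure (M.extremePoints ℝ)) := isCompact_iff_compactSpace.1
    (hM.prop.isCompact.of_isClosed_subset isClosed_closure hXM)
  have : Nonempty (closure (M.extremePoints ℝ)) :=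
    (hM.prop.isCompact.extremePoints_nonempty hM.prop.nonempty).closure.to_subtype
  have hboundary : IsBoundary G (closure (M.extremePoints ℝ)) := by
    refine isBoundary_of_forall_exists_measureReal_le fun μ _ x W hW hxW ε hε => ?_
    let _ : MeasurableSpace (closure (M.extremePoints ℝ)) := borel _
    have : BorelSpace (closure (M.extremePoints ℝ)) := ⟨rfl⟩
    obtain ⟨W', hW', rfl⟩ := isOpen_induced_iff.1 hW
    exact exists_measureReal_notMem_le_of_minimal hM μ (fun y => hXM y.2)
      (fun l => (BoundedContinuousFunction.mkOfCompact
        ⟨_, l.continuous.comp continuous_subtype_val⟩).integrable μ) hW' ⟨x, x.2, hxW⟩ hε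
  obtain ⟨q, hq, -, hqG⟩ := hY.2 _ _ _ inferInstance _ inferInstance hboundary
  exact ⟨fun y => q y, continuous_subtype_val.comp hq, fun y => hMK (hXM (q y).2),
    fun g y => congrArg Subtype.val (hqG g y)⟩

end Boundary

section States

variable {B : Type*} [CStarAlgebra B]

/-- States of a unital C⋆-algebra, encoded as contractive unital functionals; positivity is
`IsState.apply_star_mul_self_nonneg`, with converse `isState_of_apply_star_mul_self_nonneg`. -/
structure IsState (φ : B →L[ℂ] ℂ) : Prop where
  map_one : φ 1 = 1
  norm_apply_le : ∀ a, ‖φ a‖ ≤ ‖a‖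

theorem apply_star_of_apply_star_mul_self_nonneg {φ : B →ₗ[ℂ] ℂ}
    (hφ : ∀ b, 0 ≤ φ (star b * b)) (a : B) : φ (star a) = star (φ a) := by
  let _ := CStarAlgebra.spectralOrder B
  have := CStarAlgebra.spectralOrderedRing B
  exact map_star (PositiveLinearMap.mk₀ φ fun a ha => by
    obtain ⟨b, rfl⟩ := CStarAlgebra.nonneg_iff_eq_star_mul_self.1 ha
    exact hφ b) a

theorem norm_apply_star_mul_sq_le {φ : B →ₗ[ℂ] ℂ} (hφ : ∀ b, 0 ≤ φ (star b * b)) (a b : B) :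
    ‖φ (star a * b)‖ ^ 2 ≤ (φ (star a * a)).re * (φ (star b * b)).re := by
  let core : PreInnerProductSpace.Core ℂ B :=
    { inner := fun a b => φ (star a * b)
      conj_inner_symm := fun a b => by
        simp [← Complex.star_def, ← apply_star_of_apply_star_mul_self_nonneg hφ]
      re_inner_nonneg := fun a => (Complex.nonneg_iff.1 (hφ a)).1
      add_left := fun a b c => by rw [star_add, add_mul, map_add]
      smul_left := fun a b c => by simp }
  have h := InnerProductSpace.Core.inner_mul_inner_self_le (c := core) a b
  rwa [InnerProductSpace.Core.norm_inner_symm b a, ← sq] at h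

theorem isState_of_apply_star_mul_self_nonneg {φ : B →L[ℂ] ℂ} (h1 : φ 1 = 1)
    (hφ : ∀ b, 0 ≤ φ (star b * b)) : IsState φ := by
  refine ⟨h1, fun a => le_of_sq_le_sq ?_ (norm_nonneg a)⟩
  let _ := CStarAlgebra.spectralOrder B
  have := CStarAlgebra.spectralOrderedRing B
  obtain ⟨c, hc⟩ := CStarAlgebra.nonneg_iff_eq_star_mul_self.1
    (sub_nonneg.2 (CStarAlgebra.star_mul_le_algebraMap_norm_sq (a := a)))
  have hle : (φ (star a * a)).re ≤ ‖a‖ ^ 2 := by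
    have hc' := (Complex.nonneg_iff.1 (hφ c)).1
    rw [← hc, map_sub, Algebra.algebraMap_eq_smul_one, ← Complex.coe_smul, map_smul, h1] at hc'
    simpa [← Complex.ofReal_pow] using hc'
  calc ‖φ a‖ ^ 2 ≤ (φ (star a * a)).re := by
        simpa [h1] using norm_apply_star_mul_sq_le (φ := φ.toLinearMap) hφ 1 a
    _ ≤ ‖a‖ ^ 2 := hle

theorem norm_sub_smul_one_sq_le {a : B} (ha : IsSelfAdjoint a) (t : ℝ) :
    ‖a - (t * Complex.I) • (1 : B)‖ ^ 2 ≤ ‖a‖ ^ 2 + t ^ 2 := by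
  have hmul : star (a - (t * Complex.I) • (1 : B)) * (a - (t * Complex.I) • (1 : B))
      = star a * a + ((t ^ 2 : ℝ) : ℂ) • 1 := by
    have hI : ((t ^ 2 : ℝ) : ℂ) = -(t * Complex.I) * (t * Complex.I) := by
      push_cast
      linear_combination (t : ℂ) ^ 2 * Complex.I_sq
    have hstar : star (t * Complex.I) = -(t * Complex.I) := by simp
    rw [hI]
    simp only [star_sub, star_smul, star_one, ha.star_eq, sub_mul, mul_sub, smul_mul_assoc,
      mul_smul_comm, one_mul, mul_one, hstar]
    module
  calc ‖a - (t * Complex.I) • (1 : B)‖ ^ 2 = ‖star a * a + ((t ^ 2 : ℝ) : ℂ) • (1 : B)‖ := by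
        rw [sq, ← CStarRing.norm_star_mul_self, hmul]
    _ ≤ ‖star a * a‖ + ‖((t ^ 2 : ℝ) : ℂ)‖ * ‖(1 : B)‖ :=
        (norm_add_le _ _).trans_eq (by rw [norm_smul])
    _ ≤ ‖a‖ ^ 2 + t ^ 2 * 1 := by
        rw [CStarRing.norm_star_mul_self, ← sq, Complex.norm_of_nonneg (sq_nonneg t)]
        gcongr
        rcases subsingleton_or_nontrivial B with hB | hB
        · simp [Subsingleton.elim (1 : B) 0]
        · simp
    _ = ‖a‖ ^ 2 + t ^ 2 := by rw [mul_one]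

namespace IsState

variable {φ : B →L[ℂ] ℂ}

theorem apply_im_eq_zero (h : IsState φ) {a : B} (ha : IsSelfAdjoint a) : (φ a).im = 0 := by
  have hbound : ∀ t : ℝ, ((φ a).im - t) ^ 2 ≤ ‖a‖ ^ 2 + t ^ 2 := fun t => by
    have him : (φ (a - (t * Complex.I) • 1)).im = (φ a).im - t := by
      simp [h.map_one]
    calc ((φ a).im - t) ^ 2 = |(φ (a - (t * Complex.I) • 1)).im| ^ 2 := by rw [him, sq_abs]
      _ ≤ ‖a - (t * Complex.I) • (1 : B)‖ ^ 2 := by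
          gcongr
          exact (Complex.abs_im_le_norm _).trans (h.norm_apply_le _)
      _ ≤ ‖a‖ ^ 2 + t ^ 2 := norm_sub_smul_one_sq_le ha t
  by_contra hne
  have ht := hbound (-(‖a‖ ^ 2 / (φ a).im))
  have hcancel : (φ a).im * (‖a‖ ^ 2 / (φ a).im) = ‖a‖ ^ 2 := mul_div_cancel₀ _ hne
  have hpos : 0 < (φ a).im ^ 2 := by positivity
  nlinarith [sq_nonneg ‖a‖]

/- If `0 ≤ a`, then `‖a‖` and `φ a` are within `‖‖a‖ - a‖ ≤ ‖a‖` of each other. -/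
theorem apply_star_mul_self_nonneg (h : IsState φ) (b : B) : 0 ≤ φ (star b * b) := by
  let _ := CStarAlgebra.spectralOrder B
  have := CStarAlgebra.spectralOrderedRing B
  have hsa : IsSelfAdjoint (star b * b) := IsSelfAdjoint.star_mul_self b
  have hnorm : ‖algebraMap ℝ B ‖star b * b‖ - star b * b‖ ≤ ‖star b * b‖ :=
    (CStarAlgebra.norm_le_iff_le_algebraMap _ (norm_nonneg _)
      (sub_nonneg.2 hsa.le_algebraMap_norm_self)).2 (sub_le_self _ (star_mul_self_nonneg b))
  have hφ : φ (algebraMap ℝ B ‖star b * b‖ - star b * b)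
      = ((‖star b * b‖ : ℝ) : ℂ) - φ (star b * b) := by
    rw [map_sub, Algebra.algebraMap_eq_smul_one, ← Complex.coe_smul, map_smul, h.map_one,
      smul_eq_mul, mul_one]
  have hre := (Complex.re_le_norm _).trans ((h.norm_apply_le _).trans hnorm)
  rw [hφ, Complex.sub_re, Complex.ofReal_re] at hre
  exact Complex.nonneg_iff.2 ⟨by linarith, (h.apply_im_eq_zero hsa).symm⟩

theorem apply_star (h : IsState φ) (a : B) : φ (star a) = star (φ a) :=
  apply_star_of_apply_star_mul_self_nonneg (φ := φ.toLinearMap) h.apply_star_mul_self_nonneg a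

theorem apply_star_mul_eq_zero (h : IsState φ) {b : B} (hb : φ (star b * b) = 0) (a : B) :
    φ (star b * a) = 0 := by
  have hcs := norm_apply_star_mul_sq_le (φ := φ.toLinearMap) h.apply_star_mul_self_nonneg b a
  simpa [hb] using hcs

theorem apply_mul_eq_zero (h : IsState φ) {b : B} (hb : φ (star b * b) = 0) (a : B) :
    φ (a * b) = 0 := by
  rw [← star_star (a * b), h.apply_star, star_mul, h.apply_star_mul_eq_zero hb, star_zero]

theorem comp {A : Type*} [CStarAlgebra A] (h : IsState φ) (π : A →⋆ₐ[ℂ] B) (ψ : A →L[ℂ] ℂ)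
    (hψ : ∀ a, ψ a = φ (π a)) : IsState ψ :=
  ⟨by rw [hψ, _root_.map_one, h.map_one], fun a => by
    rw [hψ]; exact (h.norm_apply_le _).trans (NonUnitalStarAlgHom.norm_apply_le π a)⟩

end IsState

theorem exists_isState_forall_mem_eq_zero (I : TwoSidedIdeal B) (hI : I ≠ ⊤) :
    ∃ φ : B →L[ℂ] ℂ, IsState φ ∧ ∀ a ∈ I, φ a = 0 := by
  have h1 : (1 : B) ∉ I := fun h => hI ((TwoSidedIdeal.one_mem_iff I).1 h)
  have : Nontrivial B := ⟨1, 0, fun h => h1 (h ▸ I.zero_mem)⟩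
  let M : Submodule ℂ B := (TwoSidedIdeal.asIdeal I).restrictScalars ℂ
  have hM : ∀ a, a ∈ M ↔ a ∈ I := fun a => TwoSidedIdeal.mem_asIdeal
  have hdist : ∀ a ∈ M, 1 ≤ dist 1 a := fun a ha => by
    by_contra! hlt
    obtain ⟨v, rfl⟩ : IsUnit a := not_not.1 fun hna =>
      nonunits.subset_compl_ball hna (Metric.mem_ball'.2 hlt)
    exact h1 (by simpa using I.mul_mem_left (↑v⁻¹) _ ((hM _).1 ha))
  have hnorm : ‖M.mkQ 1‖ = 1 := by
    refine le_antisymm ((Submodule.Quotient.norm_mk_le M 1).trans (by simp)) ?_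
    change 1 ≤ ‖((1 : B) : B ⧸ M.toAddSubgroup)‖
    rw [QuotientAddGroup.norm_mk]
    exact (Metric.le_infDist ⟨0, M.zero_mem⟩).2 hdist
  obtain ⟨f, hf, hf1⟩ := exists_dual_vector'' ℂ (M.mkQ 1)
  have hbound : ∀ a, ‖f (M.mkQ a)‖ ≤ 1 * ‖a‖ := fun a =>
    (f.le_of_opNorm_le hf _).trans (by gcongr; exact Submodule.Quotient.norm_mk_le M a)
  refine ⟨(f.toLinearMap ∘ₗ M.mkQ).mkContinuous 1 hbound,
    ⟨hf1.trans (by rw [hnorm, RCLike.ofReal_one]), fun a => (hbound a).trans_eq (one_mul _)⟩,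
    fun a ha => ?_⟩
  have hmk : M.mkQ a = 0 := (Submodule.Quotient.mk_eq_zero M).2 ((hM a).2 ha)
  rw [LinearMap.mkContinuous_apply, LinearMap.comp_apply, hmk, map_zero]

theorem exists_isState_comp_eq {A : Type*} [CStarAlgebra A] (ι : A →⋆ₐ[ℂ] B)
    (hι : Function.Injective ι) {φ : A →L[ℂ] ℂ} (hφ : IsState φ) :
    ∃ ψ : B →L[ℂ] ℂ, IsState ψ ∧ ∀ a, ψ (ι a) = φ a := by
  let e : A ≃ₗ[ℂ] LinearMap.range ι.toLinearMap := LinearEquiv.ofInjective _ hι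
  have hbound : ∀ x, ‖φ (e.symm x)‖ ≤ 1 * ‖x‖ := fun x => by
    obtain ⟨a, rfl⟩ := e.surjective x
    have hnorm : ‖e a‖ = ‖a‖ := NonUnitalStarAlgHom.norm_map ι hι a
    rw [e.symm_apply_apply, hnorm, one_mul]
    exact hφ.norm_apply_le a
  obtain ⟨ψ, hψ, hψnorm⟩ := exists_extension_norm_eq _
    ((φ.toLinearMap ∘ₗ e.symm.toLinearMap).mkContinuous 1 hbound)
  have hext : ∀ a, ψ (ι a) = φ a := fun a =>
    (hψ (e a)).trans (congrArg φ (e.symm_apply_apply a))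
  refine ⟨ψ, ⟨by rw [← map_one ι, hext, hφ.map_one], fun b => ?_⟩, hext⟩
  have hle : ‖ψ‖ ≤ 1 := hψnorm.trans_le (LinearMap.mkContinuous_norm_le _ zero_le_one _)
  exact (ψ.le_of_opNorm_le hle b).trans_eq (one_mul _)

end States

section StateSpace

theorem IsCompactConvexGSet.inter {V : Type*} [AddCommGroup V] [Module ℝ V] [TopologicalSpace V]
    {ρ : G →* (V →L[ℝ] V)} {K C : Set V} (hK : IsCompactConvexGSet ρ K) (hC : IsClosed C)
    (hCc : Convex ℝ C) (hCρ : ∀ g, Set.MapsTo (ρ g) C C) (hne : (K ∩ C).Nonempty) :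
    IsCompactConvexGSet ρ (K ∩ C) :=
  ⟨hne, hK.isCompact.inter_right hC, hK.convex.inter hCc,
    fun g => (hK.mapsTo g).inter_inter (hCρ g)⟩

/-- The action of `G` on the product of two spaces on which it acts linearly. -/
def prodAction {V W : Type*} [AddCommGroup V] [Module ℝ V] [TopologicalSpace V] [AddCommGroup W]
    [Module ℝ W] [TopologicalSpace W] (ρ : G →* (V →L[ℝ] V)) (σ : G →* (W →L[ℝ] W)) :
    G →* (V × W →L[ℝ] V × W) where
  toFun g := (ρ g).prodMap (σ g)
  map_one' := by ext <;> simp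
  map_mul' g h := by ext <;> simp

theorem IsCompactConvexGSet.prod {V W : Type*} [AddCommGroup V] [Module ℝ V] [TopologicalSpace V]
    [AddCommGroup W] [Module ℝ W] [TopologicalSpace W] {ρ : G →* (V →L[ℝ] V)}
    {σ : G →* (W →L[ℝ] W)} {K : Set V} {L : Set W} (hK : IsCompactConvexGSet ρ K)
    (hL : IsCompactConvexGSet σ L) : IsCompactConvexGSet (prodAction ρ σ) (K ×ˢ L) :=
  ⟨hK.nonempty.prod hL.nonempty, hK.isCompact.prod hL.isCompact, hK.convex.prod hL.convex,
    fun g => (hK.mapsTo g).prodMap (hL.mapsTo g)⟩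

variable {B : Type*} [CStarAlgebra B]

/-- The action `φ ↦ φ ∘ α_g⁻¹` on the weak* dual of a C⋆-algebra `B` contragredient to an action
`α` on `B`. -/
def dualAction (α : G →* (B ≃⋆ₐ[ℂ] B)) : G →* (WeakDual ℂ B →L[ℝ] WeakDual ℂ B) where
  toFun g :=
    { toFun := fun φ => StrongDual.toWeakDual
        ((WeakDual.toStrongDual φ).comp ⟨(α g⁻¹ : B →ₗ[ℂ] B),
          (StarAlgEquiv.isometry (α g⁻¹)).continuous⟩)
      map_add' := fun φ ψ => rfl
      map_smul' := fun c φ => rfl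
      cont := WeakDual.continuous_of_continuous_eval fun a => WeakDual.eval_continuous (α g⁻¹ a) }
  map_one' := by
    refine ContinuousLinearMap.ext fun φ => DFunLike.ext _ _ fun a => ?_
    change φ (α 1⁻¹ a) = φ a
    rw [inv_one, map_one, StarAlgEquiv.aut_one, StarAlgEquiv.coe_refl, id]
  map_mul' g h := by
    refine ContinuousLinearMap.ext fun φ => DFunLike.ext _ _ fun a => ?_
    change φ (α (g * h)⁻¹ a) = φ (α h⁻¹ (α g⁻¹ a))
    rw [mul_inv_rev, map_mul, StarAlgEquiv.mul_apply]

theorem dualAction_apply (α : G →* (B ≃⋆ₐ[ℂ] B)) (g : G) (φ : WeakDual ℂ B) (a : B) :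
    dualAction α g φ a = φ (α g⁻¹ a) := rfl

variable (B) in
/-- The states of `B`, as a subset of its weak* dual. -/
def stateSpace : Set (WeakDual ℂ B) := {φ | IsState (WeakDual.toStrongDual φ)}

instance {E : Type*} [AddCommGroup E] [Module ℂ E] [TopologicalSpace E] :
    LocallyConvexSpace ℝ (WeakDual ℂ E) :=
  WeakBilin.locallyConvexSpace (B := topDualPairing ℂ E)

theorem isCompact_stateSpace : IsCompact (stateSpace B) := by
  have : stateSpace B
      = WeakDual.toStrongDual ⁻¹' Metric.closedBall 0 1 ∩ {φ : WeakDual ℂ B | φ 1 = 1} := by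
    ext φ
    rw [Set.mem_inter_iff, Set.mem_preimage, mem_closedBall_zero_iff,
      ContinuousLinearMap.opNorm_le_iff zero_le_one]
    simp only [one_mul]
    exact ⟨fun h => ⟨h.norm_apply_le, h.map_one⟩, fun h => ⟨h.2, h.1⟩⟩
  rw [this]
  exact (WeakDual.isCompact_closedBall _ _).inter_right
    (isClosed_eq (WeakDual.eval_continuous 1) continuous_const)

theorem convex_stateSpace : Convex ℝ (stateSpace B) := by
  refine fun φ hφ ψ hψ s t hs ht hst => ⟨?_, fun a => ?_⟩
  · have hφ1 : φ 1 = 1 := hφ.map_one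
    have hψ1 : ψ 1 = 1 := hψ.map_one
    change s • φ 1 + t • ψ 1 = 1
    rw [hφ1, hψ1, ← add_smul, hst, one_smul]
  · calc ‖s • φ a + t • ψ a‖ ≤ s * ‖φ a‖ + t * ‖ψ a‖ :=
          (norm_add_le _ _).trans_eq (by
            rw [norm_smul, norm_smul, Real.norm_of_nonneg hs, Real.norm_of_nonneg ht])
      _ ≤ s * ‖a‖ + t * ‖a‖ := by gcongr; exacts [hφ.norm_apply_le a, hψ.norm_apply_le a]
      _ = ‖a‖ := by rw [← add_mul, hst, one_mul]

theorem isCompactConvexGSet_stateSpace (α : G →* (B ≃⋆ₐ[ℂ] B)) (hne : (stateSpace B).Nonempty) :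
    IsCompactConvexGSet (dualAction α) (stateSpace B) :=
  ⟨hne, isCompact_stateSpace, convex_stateSpace, fun g _ hφ =>
    hφ.comp (α g⁻¹ : B →⋆ₐ[ℂ] B) _ fun _ => rfl⟩

end StateSpace

section EquivariantStateField

variable {Y : Type*} [TopologicalSpace Y] [MulAction G Y] {A B : Type*} [CStarAlgebra A]
  [CStarAlgebra B] {α : G →* (B ≃⋆ₐ[ℂ] B)} {β : G →* (A ≃⋆ₐ[ℂ] A)} {q : Y → B →L[ℂ] ℂ}

/-- A weak*-continuous field `y ↦ q y` of states of `B`, equivariant for the actions of `G` on `Y`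
and on `B`. It is the same as a `G`-equivariant u.c.p. map `B → C(Y)`, namely
`a ↦ (y ↦ q y a)`. -/
structure IsEquivariantStateField (α : G →* (B ≃⋆ₐ[ℂ] B)) (q : Y → B →L[ℂ] ℂ) : Prop where
  isState : ∀ y, IsState (q y)
  continuous_apply : ∀ a, Continuous fun y => q y a
  apply_smul : ∀ (g : G) y a, q (g • y) (α g a) = q y a

theorem IsEquivariantStateField.apply_smul_eq (hq : IsEquivariantStateField α q) (g : G) (y : Y)
    (a : B) : q (g • y) a = q y (α g⁻¹ a) := by
  rw [← hq.apply_smul g y, ← StarAlgEquiv.mul_apply, ← map_mul, mul_inv_cancel, map_one,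
    StarAlgEquiv.aut_one, StarAlgEquiv.coe_refl, id]

theorem isEquivariantStateField_of_dualAction {q : Y → WeakDual ℂ B} (hq : Continuous q)
    (hqS : ∀ y, q y ∈ stateSpace B) (hqG : ∀ (g : G) y, q (g • y) = dualAction α g (q y)) :
    IsEquivariantStateField α fun y => WeakDual.toStrongDual (q y) where
  isState := hqS
  continuous_apply a := (WeakDual.eval_continuous a).comp hq
  apply_smul g y a := by
    change q (g • y) (α g a) = q y a
    rw [hqG, dualAction_apply, ← StarAlgEquiv.mul_apply, ← map_mul, inv_mul_cancel, map_one,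
      StarAlgEquiv.aut_one, StarAlgEquiv.coe_refl, id]

theorem IsEquivariantStateField.comp (hq : IsEquivariantStateField α q) (ι : A →⋆ₐ[ℂ] B)
    (hι : ∀ g a, ι (β g a) = α g (ι a)) {r : Y → A →L[ℂ] ℂ} (hr : ∀ y a, r y a = q y (ι a)) :
    IsEquivariantStateField β r where
  isState y := (hq.isState y).comp ι _ (hr y)
  continuous_apply a := by simpa only [hr] using hq.continuous_apply (ι a)
  apply_smul g y a := by rw [hr, hr, hι, hq.apply_smul]

end EquivariantStateField

section Furstenberg

variable {Y : Type u} [TopologicalSpace Y] [CompactSpace Y] [T2Space Y] [MulAction G Y]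
  [ContinuousConstSMul G Y] {B : Type u} [CStarAlgebra B]

theorem IsFurstenberg.exists_isEquivariantStateField (hY : IsFurstenberg G Y)
    (α : G →* (B ≃⋆ₐ[ℂ] B)) {S : Set B} (hS : ∀ g, Set.MapsTo (α g) S S) {φ : B →L[ℂ] ℂ}
    (hφ : IsState φ) (hφS : ∀ a ∈ S, φ a = 0) :
    ∃ q : Y → B →L[ℂ] ℂ, IsEquivariantStateField α q ∧ ∀ y, ∀ a ∈ S, q y a = 0 := by
  let C : Set (WeakDual ℂ B) := {ψ | ∀ a ∈ S, ψ a = 0}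
  have hC : IsClosed C := by
    simp only [C, Set.ofPred_forall]
    exact isClosed_biInter fun a _ => isClosed_eq (WeakDual.eval_continuous a) continuous_const
  have hCc : Convex ℝ C := fun ψ hψ χ hχ s t _ _ _ a ha => by
    change s • ψ a + t • χ a = 0
    rw [hψ a ha, hχ a ha, smul_zero, smul_zero, add_zero]
  obtain ⟨q, hq, hqK, hqG⟩ := hY.exists_equivariant_map <|
    (isCompactConvexGSet_stateSpace α ⟨StrongDual.toWeakDual φ, hφ⟩).inter hC hCc
      (fun g ψ hψ a ha => hψ _ (hS g⁻¹ ha)) ⟨StrongDual.toWeakDual φ, hφ, hφS⟩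
  exact ⟨_, isEquivariantStateField_of_dualAction hq (fun y => (hqK y).1) hqG, fun y => (hqK y).2⟩

end Furstenberg

section Riesz

variable {Y : Type*} [TopologicalSpace Y] [CompactSpace Y]

theorem IsState.re_apply_compLeftContinuous_nonneg {Λ : C(Y, ℂ) →L[ℂ] ℂ} (hΛ : IsState Λ)
    {F : C(Y, ℝ)} (hF : 0 ≤ F) : 0 ≤ (Λ (Complex.ofRealCLM.compLeftContinuous ℝ Y F)).re := by
  let root : C(Y, ℂ) := ⟨fun y => (√(F y) : ℂ), by fun_prop⟩
  have hroot : star root * root = Complex.ofRealCLM.compLeftContinuous ℝ Y F := by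
    refine ContinuousMap.ext fun y => ?_
    change star (√(F y) : ℂ) * (√(F y) : ℂ) = (F y : ℂ)
    rw [Complex.star_def, Complex.conj_ofReal, ← Complex.ofReal_mul]
    exact congrArg _ (Real.mul_self_sqrt (hF y))
  exact hroot ▸ (Complex.nonneg_iff.1 (hΛ.apply_star_mul_self_nonneg root)).1

theorem IsState.exists_probabilityMeasure [T2Space Y] [MeasurableSpace Y] [BorelSpace Y]
    {Λ : C(Y, ℂ) →L[ℂ] ℂ} (hΛ : IsState Λ) :
    ∃ μ : ProbabilityMeasure Y, ∀ f : C(Y, ℂ), Λ f = ∫ y, f y ∂(μ : Measure Y) := by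
  let c : C(Y, ℝ) →L[ℝ] C(Y, ℂ) := Complex.ofRealCLM.compLeftContinuous ℝ Y
  let L : CompactlySupportedContinuousMap Y ℝ →ₚ[ℝ] ℝ := PositiveLinearMap.mk₀
    { toFun := fun f => (Λ (c f.toContinuousMap)).re
      map_add' := fun f g => by
        rw [← Complex.add_re, ← map_add, ← map_add]; rfl
      map_smul' := fun r f => by
        have hsmul : c (r • f).toContinuousMap = (r : ℂ) • c f.toContinuousMap := by
          ext y; simp [c]
        rw [hsmul, map_smul, smul_eq_mul, Complex.re_ofReal_mul]; rfl }
    fun f hf => hΛ.re_apply_compLeftContinuous_nonneg hf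
  let μ : Measure Y := RealRMK.rieszMeasure L
  have hreal : ∀ F : C(Y, ℝ), Λ (c F) = ((∫ y, F y ∂μ : ℝ) : ℂ) := fun F =>
    Complex.ext (RealRMK.integral_rieszMeasure L
      (CompactlySupportedContinuousMap.continuousMapEquiv F)).symm
      (hΛ.apply_im_eq_zero (ContinuousMap.ext fun y => Complex.conj_ofReal (F y)))
  have hμ : IsProbabilityMeasure μ := by
    have hone : c 1 = 1 := by ext y; simp [c]
    have hmass := hreal 1
    rw [hone, hΛ.map_one] at hmass
    simp only [ContinuousMap.one_apply, integral_const, smul_eq_mul, mul_one] at hmass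
    exact ⟨(ENNReal.toReal_eq_one_iff _).1 (Complex.ofReal_injective hmass.symm)⟩
  refine ⟨⟨μ, hμ⟩, fun f => ?_⟩
  have hdecomp : f = c ⟨fun y => (f y).re, by fun_prop⟩
      + Complex.I • c ⟨fun y => (f y).im, by fun_prop⟩ :=
    ContinuousMap.ext fun y => by simp [c, mul_comm Complex.I, Complex.re_add_im]
  have hint : Integrable f μ := (BoundedContinuousFunction.mkOfCompact f).integrable μ
  calc Λ f = (∫ y, (f y).re ∂μ : ℝ) + Complex.I * (∫ y, (f y).im ∂μ : ℝ) := by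
        conv_lhs => rw [hdecomp]
        rw [map_add, map_smul, hreal, hreal, smul_eq_mul]; rfl
    _ = ∫ y, f y ∂μ := by rw [mul_comm]; exact integral_re_add_im hint

end Riesz

section Rigidity

variable {Y : Type*} [TopologicalSpace Y] [MulAction G Y] [ContinuousConstSMul G Y]

variable (G Y) in
/-- The action of `G` on `C(Y, ℂ)` by translations. -/
def translationAction : G →* (C(Y, ℂ) ≃⋆ₐ[ℂ] C(Y, ℂ)) where
  toFun g := (Homeomorph.smul g⁻¹).compStarAlgEquiv' ℂ ℂ
  map_one' := by
    refine StarAlgEquiv.ext fun f => ContinuousMap.ext fun y => ?_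
    change f ((1 : G)⁻¹ • y) = f y
    rw [inv_one, one_smul]
  map_mul' g h := by
    refine StarAlgEquiv.ext fun f => ContinuousMap.ext fun y => ?_
    change f ((g * h)⁻¹ • y) = f (h⁻¹ • g⁻¹ • y)
    rw [mul_inv_rev, mul_smul]

theorem translationAction_apply (g : G) (f : C(Y, ℂ)) (y : Y) :
    translationAction G Y g f y = f (g⁻¹ • y) := rfl

variable [CompactSpace Y]

variable (G) in
theorem isEquivariantStateField_evalCLM :
    IsEquivariantStateField (translationAction G Y) fun y => ContinuousMap.evalCLM ℂ y where
  isState y := ⟨rfl, fun f => f.norm_coe_le_norm y⟩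
  continuous_apply f := f.continuous
  apply_smul g y f := congrArg f (inv_smul_smul g y)

variable [T2Space Y]

theorem IsBoundary.exists_filter (hY : IsBoundary G Y) {Λ : C(Y, ℂ) →L[ℂ] ℂ} (hΛ : IsState Λ)
    (z : Y) : ∃ l : Filter G, l.NeBot ∧
      ∀ f, l.Tendsto (fun g => Λ (translationAction G Y g⁻¹ f)) (nhds (f z)) := by
  let _ : MeasurableSpace Y := borel Y
  have : BorelSpace Y := ⟨rfl⟩
  obtain ⟨μ, hμ⟩ := hΛ.exists_probabilityMeasure
  let orbit : G → ProbabilityMeasure Y := fun g =>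
    μ.map (continuous_const_smul g).measurable.aemeasurable (f := (g • ·))
  have hne : (Filter.comap orbit (nhds (diracProba z))).NeBot := by
    have hcl := hY.2 μ z
    have hrange : {ν : ProbabilityMeasure Y | ∃ g : G, ν = orbit g} = Set.range orbit :=
      Set.ext fun ν => ⟨fun ⟨g, hg⟩ => ⟨g, hg.symm⟩, fun ⟨g, hg⟩ => ⟨g, hg.symm⟩⟩
    change diracProba z ∈ closure {ν : ProbabilityMeasure Y | ∃ g : G, ν = orbit g} at hcl
    rw [hrange, mem_closure_iff_frequently] at hcl
    exact Filter.comap_neBot_iff_frequently.2 hcl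
  refine ⟨_, hne, fun f => ?_⟩
  have hlim := (ProbabilityMeasure.tendsto_iff_forall_integral_rclike_tendsto ℂ).1
    (Filter.tendsto_comap (f := orbit) (x := nhds (diracProba z)))
    (BoundedContinuousFunction.mkOfCompact f)
  have hdirac : ∫ y, f y ∂(diracProba z : Measure Y) = f z :=
    integral_dirac' _ _ f.continuous.stronglyMeasurable
  have horbit : ∀ g : G, ∫ y, f y ∂(orbit g : Measure Y) = Λ (translationAction G Y g⁻¹ f) :=
    fun g => by
      rw [hμ, ProbabilityMeasure.toMeasure_map, integral_map
        (continuous_const_smul g).measurable.aemeasurable f.continuous.aestronglyMeasurable]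
      simp only [translationAction_apply, inv_inv]
  simpa only [BoundedContinuousFunction.mkOfCompact_apply, hdirac, horbit] using hlim

/- The mean of `ev_z` and `q z` can be translated towards the point mass at `z`, and by positivity
this forces both halves to converge to it. -/
theorem IsEquivariantStateField.apply_eq (hY : IsBoundary G Y) {q : Y → C(Y, ℂ) →L[ℂ] ℂ}
    (hq : IsEquivariantStateField (translationAction G Y) q) (z : Y) (f : C(Y, ℂ)) :
    q z f = f z := by
  have hev := (isEquivariantStateField_evalCLM G (Y := Y)).isState z
  obtain ⟨l, hl, hlim⟩ := hY.exists_filter (convex_stateSpace hev (hq.isState z)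
    (by norm_num : (0 : ℝ) ≤ 1 / 2) (by norm_num : (0 : ℝ) ≤ 1 / 2) (by norm_num)) z
  have hmean : ∀ f : C(Y, ℂ),
      l.Tendsto (fun g => f (g • z) + q (g • z) f) (nhds (2 * f z)) := fun f => by
    refine ((hlim f).const_mul 2).congr fun g => ?_
    rw [hq.apply_smul_eq]
    change 2 * ((1 / 2 : ℝ) • f (g⁻¹⁻¹ • z) + (1 / 2 : ℝ) • q z _) = _
    rw [inv_inv, Complex.real_smul, Complex.real_smul]
    push_cast
    ring
  have heval : ∀ f : C(Y, ℂ), l.Tendsto (fun g => f (g • z)) (nhds (f z)) := fun f => by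
    let b : C(Y, ℂ) := f - algebraMap ℂ C(Y, ℂ) (f z)
    have hb : ∀ y, (star b * b) y = ((‖f y - f z‖ ^ 2 : ℝ) : ℂ) := fun y => by
      rw [Complex.ofReal_pow, ← Complex.conj_mul']; rfl
    have hre : l.Tendsto (fun g => ‖f (g • z) - f z‖ ^ 2 + (q (g • z) (star b * b)).re)
        (nhds 0) := by
      have hlim := (Complex.continuous_re.tendsto _).comp (hmean (star b * b))
      simp only [hb, sub_self, norm_zero, ne_eq, OfNat.ofNat_ne_zero, not_false_eq_true, zero_pow,
        Complex.ofReal_zero, mul_zero, Complex.zero_re] at hlim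
      exact hlim.congr fun g => by rw [Function.comp_apply, Complex.add_re, Complex.ofReal_re]
    have hsq : l.Tendsto (fun g => ‖f (g • z) - f z‖ ^ 2) (nhds 0) :=
      squeeze_zero (fun g => sq_nonneg _) (fun g => le_add_of_nonneg_right
        (Complex.nonneg_iff.1 ((hq.isState (g • z)).apply_star_mul_self_nonneg b)).1) hre
    rw [tendsto_iff_norm_sub_tendsto_zero]
    simpa using hsq.sqrt
  have hfield : ∀ f : C(Y, ℂ), l.Tendsto (fun g => q (g • z) f) (nhds (f z)) := fun f => by
    simpa [two_mul] using (hmean f).sub (heval f)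
  exact tendsto_nhds_unique (heval ⟨fun y => q y f, hq.continuous_apply f⟩) (hfield f)

end Rigidity

section Extension

theorem IsFurstenberg.exists_isEquivariantStateField_comp_eq {Y : Type u} [TopologicalSpace Y]
    [CompactSpace Y] [T2Space Y] [MulAction G Y] [ContinuousConstSMul G Y]
    (hY : IsFurstenberg G Y) {A : Type*} [CStarAlgebra A] {B : Type u} [CStarAlgebra B]
    {α : G →* (B ≃⋆ₐ[ℂ] B)} {β : G →* (A ≃⋆ₐ[ℂ] A)} {ι : A →⋆ₐ[ℂ] B} (hι : Function.Injective ι)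
    (hιG : ∀ g a, ι (β g a) = α g (ι a)) {q : Y → A →L[ℂ] ℂ} (hq : IsEquivariantStateField β q) :
    ∃ Q : Y → B →L[ℂ] ℂ, IsEquivariantStateField α Q ∧ ∀ y a, Q y (ι a) = q y a := by
  let Φ : A → C(Y, ℂ) := fun a => ⟨fun y => q y a, hq.continuous_apply a⟩
  have hΦ : ∀ g a, Φ (β g a) = translationAction G Y g (Φ a) := fun g a =>
    ContinuousMap.ext fun y => by
      rw [translationAction_apply, ContinuousMap.coe_mk, ContinuousMap.coe_mk, hq.apply_smul_eq,
        inv_inv]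
  let C : Set (WeakDual ℂ B × WeakDual ℂ C(Y, ℂ)) := {p | ∀ a, p.1 (ι a) = p.2 (Φ a)}
  have hC : IsClosed C := by
    simp only [C, Set.ofPred_forall]
    exact isClosed_iInter fun a => isClosed_eq ((WeakDual.eval_continuous _).comp continuous_fst)
      ((WeakDual.eval_continuous _).comp continuous_snd)
  have hCc : Convex ℝ C := fun p hp r hr s t _ _ _ a => by
    change s • p.1 (ι a) + t • r.1 (ι a) = s • p.2 (Φ a) + t • r.2 (Φ a)
    rw [hp a, hr a]
  have hCG : ∀ g, Set.MapsTo
      (prodAction (dualAction α) (dualAction (translationAction G Y)) g) C C := fun g p hp a => by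
    change p.1 (α g⁻¹ (ι a)) = p.2 (translationAction G Y g⁻¹ (Φ a))
    rw [← hιG, hp, hΦ]
  obtain ⟨y₀⟩ := hY.1.1
  obtain ⟨ψ, hψ, hψι⟩ := exists_isState_comp_eq ι hι (hq.isState y₀)
  have hev := (isEquivariantStateField_evalCLM G).isState y₀
  obtain ⟨Q, hQ, hQK, hQG⟩ := hY.exists_equivariant_map <|
    ((isCompactConvexGSet_stateSpace α ⟨StrongDual.toWeakDual ψ, hψ⟩).prod
      (isCompactConvexGSet_stateSpace (translationAction G Y)
        ⟨StrongDual.toWeakDual _, hev⟩)).inter hC hCc hCG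
      ⟨(StrongDual.toWeakDual ψ, StrongDual.toWeakDual _), ⟨hψ, hev⟩, hψι⟩
  have hfst := isEquivariantStateField_of_dualAction (α := α) (continuous_fst.comp hQ)
    (fun y => (hQK y).1.1) fun g y => congrArg Prod.fst (hQG g y)
  have hsnd := isEquivariantStateField_of_dualAction (continuous_snd.comp hQ)
    (fun y => (hQK y).1.2) fun g y => congrArg Prod.snd (hQG g y)
  exact ⟨_, hfst, fun y a => ((hQK y).2 a).trans (hsnd.apply_eq hY.1 y (Φ a))⟩

end Extension

section MultiplicativeDomain

variable {A B : Type*} [Ring A] [StarRing A] [Algebra ℂ A] [CStarAlgebra B]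
  {φ : B →L[ℂ] ℂ} {π : A →⋆ₐ[ℂ] B} {χ : A →⋆ₐ[ℂ] ℂ}

theorem IsState.apply_mul_of_comp_eq (hφ : IsState φ) (h : ∀ f, φ (π f) = χ f) (a : B) (f : A) :
    φ (a * π f) = φ a * χ f := by
  have hχ : χ (f - χ f • 1) = 0 := by
    rw [map_sub, map_smul, _root_.map_one, smul_eq_mul, mul_one, sub_self]
  have hb : φ (star (π (f - χ f • 1)) * π (f - χ f • 1)) = 0 := by
    rw [← map_star, ← map_mul, h, map_mul, hχ, mul_zero]
  have hπ : π f = π (f - χ f • 1) + χ f • 1 := by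
    rw [map_sub, map_smul, _root_.map_one, sub_add_cancel]
  rw [hπ, mul_add, map_add, hφ.apply_mul_eq_zero hb, zero_add, mul_smul_comm, mul_one, map_smul,
    smul_eq_mul, mul_comm]

theorem IsState.apply_mul_of_comp_eq' (hφ : IsState φ) (h : ∀ f, φ (π f) = χ f) (f : A) (a : B) :
    φ (π f * a) = χ f * φ a := by
  have := congrArg star (hφ.apply_mul_of_comp_eq h (star a) (star f))
  rwa [← hφ.apply_star, star_mul, map_star, star_star, star_star, star_mul, map_star, star_star,
    hφ.apply_star, star_star] at this

end MultiplicativeDomain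

section CovariantPair

theorem coe_inv_unitary {B : Type*} [Monoid B] [StarMul B] (U : G →* unitary B) (g : G) :
    (U g⁻¹ : B) = star (U g : B) := by
  rw [map_inv, ← Unitary.star_eq_inv, Unitary.coe_star]

variable {B : Type*} [CStarAlgebra B] {U : G →* unitary B}

/-- The conjugation action of `G` on a C⋆-algebra in which it is unitarily represented. -/
def conjAction (U : G →* unitary B) : G →* (B ≃⋆ₐ[ℂ] B) := (Unitary.conjStarAlgAut ℂ B).comp U

theorem conjAction_apply (U : G →* unitary B) (g : G) (b : B) :
    conjAction U g b = U g * b * (U g⁻¹ : B) := by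
  rw [coe_inv_unitary]
  exact Unitary.conjStarAlgAut_apply _ _

variable {Y : Type*} [TopologicalSpace Y] [CompactSpace Y] [T2Space Y] [MulAction G Y]
  [ContinuousConstSMul G Y] {π : C(Y, ℂ) →⋆ₐ[ℂ] B} {φ : B →L[ℂ] ℂ} {y : Y}

theorem IsState.apply_unitary_eq_zero (hφ : IsState φ)
    (hπ : ∀ g f, conjAction U g (π f) = π (translationAction G Y g f))
    (h : ∀ f, φ (π f) = f y) {g : G} (hg : g • y ≠ y) : φ (U g) = 0 := by
  obtain ⟨f, hf0, hf1, -⟩ := exists_continuous_zero_one_of_isClosed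
    (isClosed_singleton (x := g • y)) (isClosed_singleton (x := y)) (by simpa using hg)
  let F : C(Y, ℂ) := Complex.ofRealCLM.compLeftContinuous ℝ Y f
  let F' := translationAction G Y g⁻¹ F
  let ev : C(Y, ℂ) →⋆ₐ[ℂ] ℂ := ContinuousMap.evalStarAlgHom ℂ ℂ y
  have hF : ev F = 1 := by simp [ev, F, hf1 rfl]
  have hF' : ev F' = 0 := by
    change F (g⁻¹⁻¹ • y) = 0
    simp [F, hf0 rfl]
  have hFF' : translationAction G Y g F' = F := ContinuousMap.ext fun z => by
    rw [translationAction_apply, translationAction_apply, inv_inv, smul_inv_smul]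
  have hcomm : π F * U g = U g * π F' := by
    rw [← hFF', ← hπ, conjAction_apply, coe_inv_unitary, mul_assoc, Unitary.coe_star_mul_self,
      mul_one]
  calc φ (U g) = φ (π F * U g) := by rw [hφ.apply_mul_of_comp_eq' (χ := ev) h, hF, one_mul]
    _ = 0 := by rw [hcomm, hφ.apply_mul_of_comp_eq (χ := ev) h, hF', mul_zero]

end CovariantPair

section PermutationRepresentation

variable {α : Type*}

section Isometry

variable {β 𝕜 : Type*} [NormedField 𝕜] {p : ℝ≥0∞}

theorem memℓp_comp_equiv (e : α ≃ β) {f : β → 𝕜} (hf : Memℓp f p) : Memℓp (f ∘ e) p := by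
  rcases p.trichotomy with rfl | rfl | hp
  · exact memℓp_zero ((memℓp_zero_iff.1 hf).preimage e.injective.injOn)
  · exact memℓp_infty ((memℓp_infty_iff.1 hf).mono (Set.range_comp_subset_range e fun i => ‖f i‖))
  · exact memℓp_gen (e.summable_iff.2 ((memℓp_gen_iff hp).1 hf))

variable [Fact (1 ≤ p)]

theorem norm_lp_comp_equiv (e : α ≃ β) (f : ℓ^p(β, 𝕜)) :
    ‖(⟨f ∘ e, memℓp_comp_equiv e (lp.memℓp f)⟩ : ℓ^p(α, 𝕜))‖ = ‖f‖ := by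
  rcases p.dichotomy with rfl | hp
  · rw [lp.norm_eq_ciSup, lp.norm_eq_ciSup]
    exact e.iSup_comp (g := fun i => ‖f i‖)
  · rw [lp.norm_eq_tsum_rpow (by positivity), lp.norm_eq_tsum_rpow (by positivity)]
    exact congrArg (· ^ _) (e.tsum_eq fun i => ‖f i‖ ^ p.toReal)

variable (𝕜 p α) in
/-- The isometric action of `G` on `ℓ^p(α)` by `(g f)(x) = f(g⁻¹ x)`. -/
def lpPermutation [MulAction G α] : G →* (ℓ^p(α, 𝕜) ≃ₗᵢ[𝕜] ℓ^p(α, 𝕜)) where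
  toFun g :=
    { toFun f := ⟨f ∘ MulAction.toPerm g⁻¹, memℓp_comp_equiv _ (lp.memℓp f)⟩
      invFun f := ⟨f ∘ MulAction.toPerm g, memℓp_comp_equiv _ (lp.memℓp f)⟩
      map_add' _ _ := rfl
      map_smul' _ _ := rfl
      left_inv f := lp.ext <| funext fun x => congrArg f (inv_smul_smul g x)
      right_inv f := lp.ext <| funext fun x => congrArg f (smul_inv_smul g x)
      norm_map' f := norm_lp_comp_equiv _ f }
  map_one' := LinearIsometryEquiv.ext fun f => lp.ext <| funext fun x => congrArg f <| by
    rw [inv_one, MulAction.toPerm_apply, one_smul]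
  map_mul' g h := LinearIsometryEquiv.ext fun f => lp.ext <| funext fun x => congrArg f <| by
    rw [mul_inv_rev, MulAction.toPerm_apply, mul_smul]; rfl

variable [MulAction G α]

theorem lpPermutation_apply (g : G) (f : ℓ^p(α, 𝕜)) (x : α) :
    lpPermutation α 𝕜 p g f x = f (g⁻¹ • x) := rfl

theorem lpPermutation_single [DecidableEq α] (g : G) (x : α) (c : 𝕜) :
    lpPermutation α 𝕜 p g (lp.single p x c) = lp.single p (g • x) c := by
  ext z
  rw [lpPermutation_apply, lp.coeFn_single, lp.coeFn_single, Pi.single_apply, Pi.single_apply]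
  exact if_congr inv_smul_eq_iff rfl rfl

end Isometry

variable (G α) in
/-- The unitary representation of `G` on `ℓ²(α)` by permutations. -/
def permutationRep [MulAction G α] : G →* unitary (ℓ²(α, ℂ) →L[ℂ] ℓ²(α, ℂ)) :=
  Unitary.linearIsometryEquiv.symm.toMonoidHom.comp (lpPermutation α ℂ 2)

theorem permutationRep_single [MulAction G α] [DecidableEq α] (g : G) (x : α) (c : ℂ) :
    (permutationRep G α g : ℓ²(α, ℂ) →L[ℂ] ℓ²(α, ℂ)) (lp.single 2 x c)
      = lp.single 2 (g • x) c :=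
  lpPermutation_single g x c

variable (α) in
/-- The representation of `ℓ^∞(α)` on `ℓ²(α)` by pointwise multiplication. -/
def multiplicationRep : ℓ^∞(α, ℂ) →⋆ₐ[ℂ] (ℓ²(α, ℂ) →L[ℂ] ℓ²(α, ℂ)) where
  toFun := lp.holderL (K := 1) 2 (fun _ => ContinuousLinearMap.mul ℂ ℂ) fun _ => by simp
  map_one' := ContinuousLinearMap.ext fun v => lp.ext <| funext fun x => one_mul (v x)
  map_mul' F K := ContinuousLinearMap.ext fun v => lp.ext <| funext fun x =>
    mul_assoc (F x) (K x) (v x)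
  map_zero' := map_zero _
  map_add' := map_add _
  commutes' c := ContinuousLinearMap.ext fun v => rfl
  map_star' F := by
    rw [ContinuousLinearMap.star_eq_adjoint, ContinuousLinearMap.eq_adjoint_iff]
    intro v w
    rw [lp.inner_eq_tsum, lp.inner_eq_tsum]
    refine tsum_congr fun x => ?_
    change inner ℂ (star (F x) * v x) (w x) = inner ℂ (v x) (F x * w x)
    simp only [RCLike.inner_apply, map_mul, Complex.star_def, Complex.conj_conj]
    ring

theorem conjAction_permutationRep_multiplicationRep [MulAction G α] (g : G) {F K : ℓ^∞(α, ℂ)}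
    (hK : ∀ x, K x = F (g⁻¹ • x)) :
    conjAction (permutationRep G α) g (multiplicationRep α F)
      = multiplicationRep α K := by
  rw [conjAction_apply]
  ext v x
  change F (g⁻¹ • x) * v (g⁻¹⁻¹ • g⁻¹ • x) = K x * v x
  rw [hK, inv_inv, smul_inv_smul]

variable {Y : Type*} [TopologicalSpace Y] [CompactSpace Y]

/-- The representation of `C(Y)` on `ℓ²(α)` by pointwise multiplication along `j : α → Y`. -/
def pullbackRep (j : α → Y) : C(Y, ℂ) →⋆ₐ[ℂ] (ℓ²(α, ℂ) →L[ℂ] ℓ²(α, ℂ)) :=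
  (multiplicationRep α).comp
    { toFun f := ⟨f ∘ j, memℓp_infty
        ⟨‖f‖, Set.forall_mem_range.2 fun x => f.norm_coe_le_norm (j x)⟩⟩
      map_one' := rfl
      map_mul' _ _ := rfl
      map_zero' := rfl
      map_add' _ _ := rfl
      commutes' _ := rfl
      map_star' _ := rfl }

theorem conjAction_permutationRep_pullbackRep [MulAction G α] [MulAction G Y]
    [ContinuousConstSMul G Y] {j : α → Y} (hj : ∀ (g : G) x, j (g • x) = g • j x) (g : G)
    (f : C(Y, ℂ)) :
    conjAction (permutationRep G α) g (pullbackRep j f)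
      = pullbackRep j (translationAction G Y g f) :=
  conjAction_permutationRep_multiplicationRep g fun x => (congrArg f (hj g⁻¹ x)).symm

end PermutationRepresentation

section InvariantState

variable {X : Type*} {m : ℓ^∞(X, ℂ) →L[ℂ] ℂ}

theorem IsState.apply_nonneg_of_forall_nonneg (hm : IsState m) {F : ℓ^∞(X, ℂ)}
    (hF : ∀ x, 0 ≤ F x) : 0 ≤ m F := by
  let root : ℓ^∞(X, ℂ) := ⟨fun x => (√(F x).re : ℂ), memℓp_infty ⟨√‖F‖, Set.forall_mem_range.2
    fun x => by
      rw [Complex.norm_of_nonneg (Real.sqrt_nonneg _)]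
      exact Real.sqrt_le_sqrt ((Complex.re_le_norm _).trans
        (lp.norm_apply_le_norm ENNReal.top_ne_zero F x))⟩⟩
  have hroot : star root * root = F := lp.ext <| funext fun x => by
    change star (√(F x).re : ℂ) * (√(F x).re : ℂ) = F x
    rw [Complex.star_def, Complex.conj_ofReal, ← Complex.ofReal_mul,
      Real.mul_self_sqrt (Complex.nonneg_iff.1 (hF x)).1]
    exact (Complex.eq_re_of_ofReal_le (hF x)).symm
  exact hroot ▸ hm.apply_star_mul_self_nonneg root

variable {ι E : Type*} [Finite ι] [NormedAddCommGroup E] [NormedSpace ℝ E] {σ : ι → X → X}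
  {T : ι → E →L[ℝ] E} {e : X → E}

theorem IsState.nonneg_of_forall_apply_lt (hm : IsState m)
    (hσ : ∀ i (F K : ℓ^∞(X, ℂ)), (∀ x, K x = F (σ i x)) → m K = m F)
    (he : Bornology.IsBounded (Set.range e)) (heT : ∀ i x, e (σ i x) = T i (e x))
    (L : (ι → E) →L[ℝ] ℝ) {c : ℝ} (hc : ∀ x, L (fun i => T i (e x) - e x) < c) : 0 ≤ c := by
  classical
  have := Fintype.ofFinite ι
  obtain ⟨C, hC⟩ := he.exists_norm_le
  let pairing : ι → ℓ^∞(X, ℂ) := fun i => ⟨fun x => (L (Pi.single i (e x)) : ℂ), memℓp_infty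
    ⟨‖L‖ * C, Set.forall_mem_range.2 fun x => by
      rw [Complex.norm_real]
      refine (L.le_opNorm _).trans ?_
      rw [Pi.norm_single]
      gcongr
      exact hC _ ⟨x, rfl⟩⟩⟩
  let shifted : ι → ℓ^∞(X, ℂ) := fun i => ⟨fun x => pairing i (σ i x), memℓp_infty
    ((memℓp_infty_iff.1 (lp.memℓp (pairing i))).mono
      (Set.range_comp_subset_range (σ i) fun x => ‖pairing i x‖))⟩
  let F : ℓ^∞(X, ℂ) := ∑ i, (shifted i - pairing i)
  have hF : ∀ x, F x = (L fun i => T i (e x) - e x : ℝ) := fun x => by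
    rw [← Finset.univ_sum_single fun i => T i (e x) - e x, map_sum, Complex.ofReal_sum,
      lp.coeFn_sum, Finset.sum_apply]
    refine Finset.sum_congr rfl fun i _ => ?_
    rw [Pi.single_sub, map_sub, Complex.ofReal_sub, ← heT]
    rfl
  have hmF : m F = 0 := by
    rw [map_sum]
    exact Finset.sum_eq_zero fun i _ => by
      rw [map_sub, hσ i (pairing i) (shifted i) fun _ => rfl, sub_self]
  have hpos : 0 ≤ m (algebraMap ℂ _ c - F) := hm.apply_nonneg_of_forall_nonneg fun x => by
    change 0 ≤ (c : ℂ) - F x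
    rw [hF, ← Complex.ofReal_sub]
    exact Complex.zero_le_real.2 (sub_nonneg.2 (hc x).le)
  rw [map_sub, hmF, sub_zero, Algebra.algebraMap_eq_smul_one, map_smul, hm.map_one, smul_eq_mul,
    mul_one] at hpos
  exact Complex.zero_le_real.1 hpos

/- Day's argument: otherwise a functional separates `0` from the displacements `T f - f`, and its
mean over `X` vanishes by invariance. -/
theorem IsState.exists_mem_convexHull_forall_norm_sub_le (hm : IsState m)
    (hσ : ∀ i (F K : ℓ^∞(X, ℂ)), (∀ x, K x = F (σ i x)) → m K = m F)
    (he : Bornology.IsBounded (Set.range e)) (heT : ∀ i x, e (σ i x) = T i (e x))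
    {ε : ℝ} (hε : 0 < ε) :
    ∃ f ∈ convexHull ℝ (Set.range e), ∀ i, ‖T i f - f‖ ≤ ε := by
  have := Fintype.ofFinite ι
  let displacement : E →L[ℝ] (ι → E) :=
    ContinuousLinearMap.pi fun i => T i - ContinuousLinearMap.id ℝ E
  have hzero : 0 ∈ closure (displacement '' convexHull ℝ (Set.range e)) := by
    by_contra hzero
    obtain ⟨L, c, hLc, hc⟩ := geometric_hahn_banach_closed_point
      ((convex_convexHull ℝ _).is_linear_image displacement.toLinearMap.isLinear).closure
      isClosed_closure hzero
    rw [map_zero] at hc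
    exact hc.not_ge <| hm.nonneg_of_forall_apply_lt hσ he heT L fun x =>
      hLc _ (subset_closure ⟨e x, subset_convexHull ℝ _ ⟨x, rfl⟩, rfl⟩)
  obtain ⟨_, ⟨f, hf, rfl⟩, hdist⟩ := Metric.mem_closure_iff.1 hzero ε hε
  rw [dist_zero_left] at hdist
  exact ⟨f, hf, fun i => (norm_le_pi_norm (displacement f) i).trans hdist.le⟩

end InvariantState

section AlmostInvariantVectors

variable {Z : Type*}

theorem sq_sqrt_sub_sqrt_le (a b : ℝ) : (√a - √b) ^ 2 ≤ |a - b| := by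
  wlog hab : b ≤ a generalizing a b
  · rw [← neg_sub, neg_sq, abs_sub_comm]
    exact this b a (le_of_not_ge hab)
  rw [abs_of_nonneg (sub_nonneg.2 hab)]
  have hsqrt := Real.sqrt_le_sqrt hab
  rcases le_total 0 b with hb | hb
  · nlinarith [Real.sq_sqrt hb, Real.sq_sqrt (hb.trans hab), Real.sqrt_nonneg b]
  · rw [Real.sqrt_eq_zero_of_nonpos hb, sub_zero]
    rcases le_total 0 a with ha | ha
    · rw [Real.sq_sqrt ha]; linarith
    · rw [Real.sqrt_eq_zero_of_nonpos ha]; linarith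

theorem hasSum_norm_sq (v : ℓ²(Z, ℂ)) : HasSum (fun z => ‖v z‖ ^ 2) (‖v‖ ^ 2) := by
  simpa using lp.hasSum_norm (by norm_num) v

theorem hasSum_abs (f : ℓ¹(Z, ℝ)) : HasSum (fun z => |f z|) ‖f‖ := by
  simpa using lp.hasSum_norm (by norm_num) f

/-- The square root of an `ℓ¹` function, as a vector of `ℓ²`; negative values are sent to `0`. -/
def sqrtVector (f : ℓ¹(Z, ℝ)) : ℓ²(Z, ℂ) :=
  ⟨fun z => (√(f z) : ℂ), memℓp_gen <| (hasSum_abs f).summable.of_nonneg_of_le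
    (fun z => by positivity) fun z => by
      simpa using sq_sqrt_sub_sqrt_le (f z) 0⟩

theorem norm_sqrtVector_sub_sq_le (f k : ℓ¹(Z, ℝ)) :
    ‖sqrtVector f - sqrtVector k‖ ^ 2 ≤ ‖f - k‖ := by
  refine hasSum_le (fun z => ?_) (hasSum_norm_sq _) (hasSum_abs (f - k))
  change ‖(√(f z) : ℂ) - (√(k z) : ℂ)‖ ^ 2 ≤ |f z - k z|
  rw [← Complex.ofReal_sub, Complex.norm_real, Real.norm_eq_abs, sq_abs]
  exact sq_sqrt_sub_sqrt_le _ _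

theorem norm_sqrtVector_sq {f : ℓ¹(Z, ℝ)} (hf : ∀ z, 0 ≤ f z) : ‖sqrtVector f‖ ^ 2 = ‖f‖ := by
  have hpoint : (fun z => ‖sqrtVector f z‖ ^ 2) = fun z => |f z| := funext fun z => by
    change ‖(√(f z) : ℂ)‖ ^ 2 = |f z|
    rw [Complex.norm_real, Real.norm_eq_abs, sq_abs, Real.sq_sqrt (hf z), abs_of_nonneg (hf z)]
  exact (hasSum_norm_sq _).unique (hpoint ▸ hasSum_abs f)

theorem permutationRep_sqrtVector [MulAction G Z] (g : G) (f : ℓ¹(Z, ℝ)) :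
    (permutationRep G Z g : ℓ²(Z, ℂ) →L[ℂ] ℓ²(Z, ℂ)) (sqrtVector f)
      = sqrtVector (lpPermutation Z ℝ 1 g f) := rfl

variable {X : Type*} {κ : X → Z}

theorem mem_of_mem_convexHull_range_single [DecidableEq Z] {f : ℓ¹(Z, ℝ)}
    (hf : f ∈ convexHull ℝ (Set.range fun x => (lp.single 1 (κ x) 1 : ℓ¹(Z, ℝ)))) :
    (∀ z, 0 ≤ f z) ∧ ‖f‖ = 1 ∧ ∀ z ∉ Set.range κ, f z = 0 := by
  have hnonneg : ∀ z, 0 ≤ f z := fun z =>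
    convexHull_min (Set.range_subset_iff.2 fun x => by
      change 0 ≤ (lp.single 1 (κ x) 1 : ℓ¹(Z, ℝ)) z
      rw [lp.coeFn_single]
      exact (Pi.single_nonneg.2 zero_le_one : (0 : Z → ℝ) ≤ Pi.single (κ x) 1) z)
      (convex_halfSpace_ge (lp.evalCLM ℝ (fun _ : Z => ℝ) 1 z).toLinearMap.isLinear 0) hf
  have hsum : ∑' z, f z = 1 :=
    convexHull_min (Set.range_subset_iff.2 fun x => by
      change ∑' z, (lp.single 1 (κ x) 1 : ℓ¹(Z, ℝ)) z = 1
      rw [lp.coeFn_single]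
      exact tsum_pi_single _ _) (convex_hyperplane
        (lp.tsumCLM ℝ Z ℝ).toLinearMap.isLinear 1) hf
  refine ⟨hnonneg, ?_, fun z hz => ?_⟩
  · rw [← hsum, ← (hasSum_abs f).tsum_eq]
    exact tsum_congr fun z => abs_of_nonneg (hnonneg z)
  · refine convexHull_min (Set.range_subset_iff.2 fun x => ?_) (convex_hyperplane
        (lp.evalCLM ℝ (fun _ : Z => ℝ) 1 z).toLinearMap.isLinear 0) hf
    change (lp.single 1 (κ x) 1 : ℓ¹(Z, ℝ)) z = 0
    rw [lp.coeFn_single]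
    exact Pi.single_eq_of_ne (fun h => hz ⟨x, h.symm⟩) _

theorem IsState.exists_norm_permutationRep_sub_le [MulAction G Z] {m : ℓ^∞(X, ℂ) →L[ℂ] ℂ}
    (hm : IsState m) {ι : Type*} [Finite ι] {σ : ι → X → X}
    (hσ : ∀ i (F K : ℓ^∞(X, ℂ)), (∀ x, K x = F (σ i x)) → m K = m F) {h : ι → G}
    (hκ : ∀ i x, κ (σ i x) = h i • κ x) {ε : ℝ} (hε : 0 < ε) :
    ∃ ξ : ℓ²(Z, ℂ), ‖ξ‖ = 1 ∧ (∀ z ∉ Set.range κ, ξ z = 0) ∧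
      ∀ i, ‖(permutationRep G Z (h i) : ℓ²(Z, ℂ) →L[ℂ] ℓ²(Z, ℂ)) ξ - ξ‖ ≤ ε := by
  classical
  obtain ⟨f, hf, hfh⟩ := hm.exists_mem_convexHull_forall_norm_sub_le hσ
    (T := fun i => (lpPermutation Z ℝ 1 (h i) : ℓ¹(Z, ℝ) →L[ℝ] ℓ¹(Z, ℝ)))
    (e := fun x => lp.single 1 (κ x) 1)
    (isBounded_iff_forall_norm_le.2 ⟨1, Set.forall_mem_range.2 fun x => by
      rw [lp.norm_single zero_lt_one, norm_one]⟩)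
    (fun i x => by rw [hκ]; exact (lpPermutation_single (h i) (κ x) (1 : ℝ)).symm)
    (pow_pos hε 2)
  obtain ⟨hnonneg, hnorm, hsupp⟩ := mem_of_mem_convexHull_range_single hf
  refine ⟨sqrtVector f, ?_, fun z hz => ?_, fun i => ?_⟩
  · exact (pow_eq_one_iff_of_nonneg (norm_nonneg _) two_ne_zero).1 <|
      (norm_sqrtVector_sq hnonneg).trans hnorm
  · change (√(f z) : ℂ) = 0
    rw [hsupp z hz, Real.sqrt_zero, Complex.ofReal_zero]
  · rw [permutationRep_sqrtVector]
    exact (sq_le_sq₀ (norm_nonneg _) hε.le).1 ((norm_sqrtVector_sub_sq_le _ _).trans (hfh i))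

theorem exists_retraction (H : Subgroup G) :
    ∃ κ : G → G, (∀ g, κ g ∈ H) ∧ ∀ h ∈ H, ∀ g, κ (h * g) = h * κ g := by
  let rep : G → G := fun g => (Quotient.mk (QuotientGroup.rightRel H) g).out
  refine ⟨fun g => g * (rep g)⁻¹, fun g => QuotientGroup.rightRel_apply.1 (Quotient.mk_out g),
    fun h hh g => ?_⟩
  have hrep : rep (h * g) = rep g := congrArg Quotient.out <| Quotient.sound <|
    QuotientGroup.rightRel_apply.2 (by simpa using H.inv_mem hh)
  change h * g * (rep (h * g))⁻¹ = h * (g * (rep g)⁻¹)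
  rw [hrep, mul_assoc]

theorem mem_closure_of_forall_finset {ι E : Type*} [PseudoMetricSpace E] {A : Set (ι → E)}
    {f : ι → E} (h : ∀ S : Finset ι, ∀ ε > 0, ∃ k ∈ A, ∀ i ∈ S, dist (k i) (f i) ≤ ε) :
    f ∈ closure A := by
  classical
  choose k hkA hk using fun p : Finset ι × ℕ =>
    h p.1 (1 / ((p.2 : ℝ) + 1)) Nat.one_div_pos_of_nat
  refine mem_closure_of_tendsto (b := Filter.atTop) (tendsto_pi_nhds.2 fun i => ?_)
    (.of_forall hkA)
  refine Metric.tendsto_atTop.2 fun ε hε => ?_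
  obtain ⟨n, hn⟩ := exists_nat_one_div_lt hε
  refine ⟨({i}, n), fun p hp => (hk p i (hp.1 (Finset.mem_singleton_self i))).trans_lt ?_⟩
  exact (Nat.one_div_le_one_div hp.2).trans_lt hn

theorem IsState.indicator_mem_closure {m : ℓ^∞(G, ℂ) →L[ℂ] ℂ} (hm : IsState m) {H : Subgroup G}
    (hH : ∀ h ∈ H, ∀ F K : ℓ^∞(G, ℂ), (∀ x, K x = F (h * x)) → m K = m F) :
    (H : Set G).indicator 1 ∈ closure (Set.range fun (ξ : ℓ²(G, ℂ)) (g : G) =>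
      (inner ℂ ξ ((permutationRep G G g : ℓ²(G, ℂ) →L[ℂ] ℓ²(G, ℂ)) ξ) : ℂ)) := by
  refine mem_closure_of_forall_finset fun S ε hε => ?_
  obtain ⟨κ, hκH, hκ⟩ := exists_retraction H
  have : Finite {g // g ∈ S ∧ g ∈ H} := (S.finite_toSet.subset fun g hg => hg.1).to_subtype
  obtain ⟨ξ, hξ, hsupp, hinv⟩ := hm.exists_norm_permutationRep_sub_le
    (ι := {g // g ∈ S ∧ g ∈ H}) (σ := fun h x => h.1 * x) (h := Subtype.val)
    (fun h => hH h.1 h.2.2) (fun h x => hκ h.1 h.2.2 x) hε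
  have hsuppH : ∀ z ∉ H, ξ z = 0 := fun z hz => hsupp z fun ⟨x, hx⟩ => hz (hx ▸ hκH x)
  refine ⟨_, ⟨ξ, rfl⟩, fun g hgS => ?_⟩
  simp only [dist_eq_norm]
  by_cases hg : g ∈ H
  · have hone : inner ℂ ξ ξ = (1 : ℂ) := by simp [inner_self_eq_norm_sq_to_K, hξ]
    rw [Set.indicator_of_mem hg, Pi.one_apply, ← hone, ← inner_sub_right]
    refine (norm_inner_le_norm _ _).trans ?_
    rw [hξ, one_mul]
    exact hinv ⟨g, hgS, hg⟩
  · have hzero : ∀ z, inner ℂ (ξ z) (ξ (g⁻¹ * z)) = 0 := fun z => by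
      by_cases hz : z ∈ H
      · have hgz : g⁻¹ * z ∉ H := fun h => hg (H.inv_mem_iff.1 ((H.mul_mem_cancel_right hz).1 h))
        rw [hsuppH _ hgz, inner_zero_right]
      · rw [hsuppH z hz, inner_zero_left]
    rw [Set.indicator_of_notMem hg, sub_zero, lp.inner_eq_tsum]
    refine (norm_le_zero_iff.2 ?_).trans hε.le
    exact (tsum_congr hzero).trans tsum_zero

end AlmostInvariantVectors

section WeakContainment

variable {B : Type*} [CStarAlgebra B]

/-- The extension of a unitary representation of `G` in `B` to the group algebra `ℂ[G]`. -/
def groupAlgebraHom (U : G →* unitary B) : MonoidAlgebra ℂ G →ₐ[ℂ] B :=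
  MonoidAlgebra.lift ℂ B G ((unitary B).subtype.comp U)

theorem groupAlgebraHom_single (U : G →* unitary B) (g : G) (c : ℂ) :
    groupAlgebraHom U (MonoidAlgebra.single g c) = c • (U g : B) := by
  simp [groupAlgebraHom]

theorem map_groupAlgebraHom {A : Type*} [CStarAlgebra A] {U : G →* unitary A} {V : G →* unitary B}
    (π : A →⋆ₐ[ℂ] B) (h : ∀ g, π (U g) = V g) (a : MonoidAlgebra ℂ G) :
    π (groupAlgebraHom U a) = groupAlgebraHom V a := by
  induction a using MonoidAlgebra.induction_linear with
  | zero => simp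
  | add a b ha hb => rw [map_add, map_add, map_add, ha, hb]
  | single g c => rw [groupAlgebraHom_single, groupAlgebraHom_single, map_smul, h]

variable {E F : Type*} [NormedAddCommGroup E] [InnerProductSpace ℂ E] [CompleteSpace E]
  [NormedAddCommGroup F] [InnerProductSpace ℂ F] [CompleteSpace F]
  {U : G →* unitary (E →L[ℂ] E)} {V : G →* unitary (F →L[ℂ] F)}

theorem inner_unitary_apply (U : G →* unitary (E →L[ℂ] E)) (g k : G) (v : E) :
    (inner ℂ ((U g : E →L[ℂ] E) v) ((U k : E →L[ℂ] E) v) : ℂ)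
      = inner ℂ v ((U (g⁻¹ * k) : E →L[ℂ] E) v) := by
  rw [← Unitary.inner_map_map (U g) v, ← mul_inv_cancel_left g k, map_mul U g,
    inv_mul_cancel_left]
  rfl

open Filter Topology

variable {ι : Type*} {l : Filter ι} {ξ : ι → E} {δ : F}

theorem tendsto_inner_groupAlgebraHom
    (h : ∀ g, Tendsto (fun i => (inner ℂ (ξ i) ((U g : E →L[ℂ] E) (ξ i)) : ℂ)) l
      (𝓝 (inner ℂ δ ((V g : F →L[ℂ] F) δ)))) (b c : MonoidAlgebra ℂ G) :
    Tendsto (fun i => (inner ℂ (groupAlgebraHom U b (ξ i)) (groupAlgebraHom U c (ξ i)) : ℂ)) l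
      (𝓝 (inner ℂ (groupAlgebraHom V b δ) (groupAlgebraHom V c δ))) := by
  induction b using MonoidAlgebra.induction_linear with
  | zero => simp [tendsto_const_nhds]
  | add b₁ b₂ h₁ h₂ =>
    simp only [map_add, add_apply, inner_add_left]
    exact h₁.add h₂
  | single g r =>
    induction c using MonoidAlgebra.induction_linear with
    | zero => simp [tendsto_const_nhds]
    | add c₁ c₂ h₁ h₂ =>
      simp only [map_add, add_apply, inner_add_right]
      exact h₁.add h₂
    | single k s =>
      simp only [groupAlgebraHom_single, smul_apply, inner_smul_left, inner_smul_right,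
        inner_unitary_apply]
      exact ((h _).const_mul _).const_mul _

theorem tendsto_norm_groupAlgebraHom
    (h : ∀ g, Tendsto (fun i => (inner ℂ (ξ i) ((U g : E →L[ℂ] E) (ξ i)) : ℂ)) l
      (𝓝 (inner ℂ δ ((V g : F →L[ℂ] F) δ)))) (b : MonoidAlgebra ℂ G) :
    Tendsto (fun i => ‖groupAlgebraHom U b (ξ i)‖) l (𝓝 ‖groupAlgebraHom V b δ‖) := by
  simp only [norm_eq_sqrt_re_inner (𝕜 := ℂ)]
  exact ((Real.continuous_sqrt.comp RCLike.continuous_re).tendsto _).comp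
    (tendsto_inner_groupAlgebraHom h b b)

theorem norm_groupAlgebraHom_le (hδ : DenseRange fun b => groupAlgebraHom V b δ)
    (h : (fun g => (inner ℂ δ ((V g : F →L[ℂ] F) δ) : ℂ)) ∈
      closure (Set.range fun (ξ : E) (g : G) => (inner ℂ ξ ((U g : E →L[ℂ] E) ξ) : ℂ)))
    (a : MonoidAlgebra ℂ G) : ‖groupAlgebraHom V a‖ ≤ ‖groupAlgebraHom U a‖ := by
  have hne := comap_neBot_iff_frequently.2 (mem_closure_iff_frequently.1 h)
  have hlim := tendsto_norm_groupAlgebraHom (U := U) (V := V) (ξ := fun ξ => ξ) (δ := δ)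
    (tendsto_pi_nhds.1 tendsto_comap)
  have hcyclic : ∀ b, ‖groupAlgebraHom V a (groupAlgebraHom V b δ)‖
      ≤ ‖groupAlgebraHom U a‖ * ‖groupAlgebraHom V b δ‖ := fun b => by
    rw [← mul_apply_eq_comp, ← map_mul]
    refine le_of_tendsto_of_tendsto' (hlim (a * b)) ((hlim b).const_mul _) fun ξ => ?_
    rw [map_mul, mul_apply_eq_comp]
    exact (groupAlgebraHom U a).le_opNorm _
  refine ContinuousLinearMap.opNorm_le_bound _ (norm_nonneg _) fun v => ?_
  exact hδ.induction_on v (isClosed_le (by fun_prop) (by fun_prop)) hcyclic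

theorem denseRange_groupAlgebraHom_permutationRep_single {Z : Type*} [MulAction G Z]
    [MulAction.IsPretransitive G Z] [DecidableEq Z] (z : Z) :
    DenseRange fun b => groupAlgebraHom (permutationRep G Z) b (lp.single 2 z 1) := by
  let W : Submodule ℂ ℓ²(Z, ℂ) := LinearMap.range
    ((ContinuousLinearMap.apply ℂ _ (lp.single 2 z 1 : ℓ²(Z, ℂ))).toLinearMap.comp
      (groupAlgebraHom (permutationRep G Z)).toLinearMap)
  have hW : ∀ x c, (lp.single 2 x c : ℓ²(Z, ℂ)) ∈ W := fun x c => by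
    obtain ⟨g, rfl⟩ := MulAction.exists_smul_eq G z x
    refine ⟨MonoidAlgebra.single g c, ?_⟩
    change groupAlgebraHom (permutationRep G Z) (MonoidAlgebra.single g c) (lp.single 2 z 1) = _
    rw [groupAlgebraHom_single, smul_apply, permutationRep_single, ← lp.single_smul, smul_eq_mul,
      mul_one]
  exact fun v => mem_closure_of_tendsto (lp.hasSum_single (by norm_num) v)
    (.of_forall fun s => W.sum_mem fun x _ => hW x (v x))

end WeakContainment

section ReducedGroupCStarAlgebra

theorem isClosed_redCstar : IsClosed (redCstar G : Set (ℓ²(G, ℂ) →L[ℂ] ℓ²(G, ℂ))) := by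
  unfold redCstar
  exact StarSubalgebra.isClosed_topologicalClosure _

attribute [local instance] isClosed_redCstar

theorem lreg_eq_permutationRep (g : G) : lreg g = permutationRep G G g := by
  unfold lreg lregE
  rfl

theorem coe_uu (g : G) : (uu g : ℓ²(G, ℂ) →L[ℂ] ℓ²(G, ℂ)) = permutationRep G G g := by
  rw [← lreg_eq_permutationRep]
  unfold uu
  rfl

variable (G) in
/-- The left regular representation, with values in the unitary group of `C*_λ(G)`. -/
def reducedRep : G →* unitary (redCstar G) where
  toFun g := ⟨uu g, Unitary.mem_iff.2
    ⟨Subtype.ext <| (congrArg (fun T => star T * T) (coe_uu g)).trans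
      (Unitary.coe_star_mul_self (permutationRep G G g)),
    Subtype.ext <| (congrArg (fun T => T * star T) (coe_uu g)).trans
      (Unitary.coe_mul_star_self (permutationRep G G g))⟩⟩
  map_one' := Subtype.ext <| Subtype.ext <| (coe_uu 1).trans <| by rw [map_one]; rfl
  map_mul' g h := Subtype.ext <| Subtype.ext <| by
    change (uu (g * h) : ℓ²(G, ℂ) →L[ℂ] ℓ²(G, ℂ)) = uu g * uu h
    rw [coe_uu, coe_uu, coe_uu, map_mul]
    rfl

theorem uu_one : uu (1 : G) = 1 := congrArg Subtype.val (map_one (reducedRep G))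

theorem uu_mul (g h : G) : uu (g * h) = uu g * uu h :=
  congrArg Subtype.val (map_mul (reducedRep G) g h)

theorem star_uu (g : G) : star (uu g) = uu g⁻¹ := (coe_inv_unitary (reducedRep G) g).symm

theorem toSubmodule_adjoin_range_unitary {B : Type*} [CStarAlgebra B] (U : G →* unitary B) :
    Subalgebra.toSubmodule (StarAlgebra.adjoin ℂ (Set.range fun g => (U g : B))).toSubalgebra
      = Submodule.span ℂ (Set.range fun g => (U g : B)) := by
  have hstar : star (Set.range fun g => (U g : B)) = Set.range fun g => (U g : B) := by
    rw [← Set.image_star, ← Set.range_comp, ← (Equiv.inv G).surjective.range_comp]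
    refine congrArg Set.range (funext fun g => ?_)
    change star (U g⁻¹ : B) = U g
    rw [coe_inv_unitary, star_star]
  rw [StarAlgebra.adjoin_toSubalgebra, hstar, Set.union_self]
  refine Algebra.adjoin_eq_span_of_subset ℂ ?_
  change (Submonoid.closure (MonoidHom.mrange ((unitary B).subtype.comp U) : Set B) : Set B) ⊆ _
  rw [Submonoid.closure_eq]
  exact Submodule.subset_span

theorem dense_span_range_uu :
    Dense (Submodule.span ℂ (Set.range (uu (G := G))) : Set (redCstar G)) := by
  intro x
  rw [closure_subtype]
  have hredCstar : (redCstar G : Set (ℓ²(G, ℂ) →L[ℂ] ℓ²(G, ℂ)))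
      = closure (StarAlgebra.adjoin ℂ (Set.range (lreg (G := G))) : Set _) := by
    unfold redCstar
    exact StarSubalgebra.topologicalClosure_coe _
  refine closure_mono ?_ (hredCstar.le x.2)
  intro T hT
  rw [funext lreg_eq_permutationRep] at hT
  have hT' := (toSubmodule_adjoin_range_unitary (permutationRep G G)).le hT
  have hmap := Submodule.map_span (redCstar G).subtype.toAlgHom.toLinearMap (Set.range uu)
  have huu : (redCstar G).subtype.toAlgHom.toLinearMap ∘ uu
      = fun g => (permutationRep G G g : ℓ²(G, ℂ) →L[ℂ] ℓ²(G, ℂ)) := funext coe_uu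
  rw [← Set.range_comp, huu] at hmap
  exact hmap.ge hT'

theorem ext_uu {E : Type*} [AddCommMonoid E] [Module ℂ E] [TopologicalSpace E] [T2Space E]
    {P Q : redCstar G →L[ℂ] E} (h : ∀ g, P (uu g) = Q (uu g)) : P = Q :=
  ContinuousLinearMap.ext_on dense_span_range_uu (Set.forall_mem_range.2 h)

theorem denseRange_groupAlgebraHom_reducedRep : DenseRange (groupAlgebraHom (reducedRep G)) := by
  refine dense_span_range_uu.mono (Submodule.span_le (p := LinearMap.range
    (groupAlgebraHom (reducedRep G)).toLinearMap).2 <| Set.range_subset_iff.2 fun g => ?_)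
  exact ⟨MonoidAlgebra.single g 1, (groupAlgebraHom_single _ g 1).trans (one_smul ℂ _)⟩

theorem exists_starAlgHom_apply_uu_eq {B : Type*} [CStarAlgebra B] {V : G →* unitary B}
    (hV : ∀ a, ‖groupAlgebraHom V a‖ ≤ ‖groupAlgebraHom (permutationRep G G) a‖) :
    ∃ π : redCstar G →⋆ₐ[ℂ] B, ∀ g, π (uu g) = V g := by
  let P : redCstar G →L[ℂ] B := LinearMap.extendOfNorm (groupAlgebraHom V).toLinearMap
    (groupAlgebraHom (reducedRep G)).toLinearMap
  have hP : ∀ a, P (groupAlgebraHom (reducedRep G) a) = groupAlgebraHom V a :=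
    LinearMap.extendOfNorm_eq (f := (groupAlgebraHom V).toLinearMap)
      (e := (groupAlgebraHom (reducedRep G)).toLinearMap) denseRange_groupAlgebraHom_reducedRep
      ⟨1, fun a => by
        rw [one_mul]
        exact (hV a).trans_eq <| congrArg norm
          (map_groupAlgebraHom (redCstar G).subtype coe_uu a).symm⟩
  have hPuu : ∀ g, P (uu g) = V g := fun g => by
    have := hP (MonoidAlgebra.single g 1)
    rwa [groupAlgebraHom_single, groupAlgebraHom_single, one_smul, one_smul] at this
  have hone : P 1 = 1 := by rw [← uu_one, hPuu, map_one]; rfl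
  have hmul : ∀ x y, P (x * y) = P x * P y := fun x y =>
    denseRange_groupAlgebraHom_reducedRep.induction_on₂ (p := fun x y => P (x * y) = P x * P y)
      (isClosed_eq (by fun_prop) (by fun_prop))
      (fun a b => by rw [← map_mul, hP, hP, hP, map_mul]) x y
  have hstar : ∀ x, P (star x) = star (P x) := fun x => by
    have hP' : ((starL ℂ : B ≃L⋆[ℂ] B) : B →L⋆[ℂ] B).comp (P.comp
        ((starL ℂ : redCstar G ≃L⋆[ℂ] redCstar G) : redCstar G →L⋆[ℂ] redCstar G)) = P :=
      ext_uu fun g => by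
        change star (P (star (uu g))) = P (uu g)
        rw [star_uu, hPuu, hPuu, coe_inv_unitary, star_star]
    exact (star_eq_iff_star_eq.1 (DFunLike.congr_fun hP' x)).symm
  exact ⟨{ toFun := P, map_one' := hone, map_mul' := hmul, map_zero' := map_zero P,
           map_add' := map_add P, map_star' := hstar,
           commutes' := fun r => by
            rw [Algebra.algebraMap_eq_smul_one, Algebra.algebraMap_eq_smul_one, ← hone]
            exact map_smul P r 1 }, hPuu⟩

theorem IsCstarSimple.injective (hG : IsCstarSimple G) {B : Type*} [Ring B] [Nontrivial B]
    [Algebra ℂ B] [StarRing B] [TopologicalSpace B] [T1Space B] {π : redCstar G →⋆ₐ[ℂ] B}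
    (hπ : Continuous π) : Function.Injective π := by
  have hclosed : IsClosed (TwoSidedIdeal.ker π : Set (redCstar G)) := by
    have : (TwoSidedIdeal.ker π : Set (redCstar G)) = π ⁻¹' {0} :=
      Set.ext fun x => TwoSidedIdeal.mem_ker π
    exact this ▸ isClosed_singleton.preimage hπ
  refine (TwoSidedIdeal.ker_eq_bot π).1 ((hG _ hclosed).resolve_right fun h => ?_)
  have hone : (1 : redCstar G) ∈ TwoSidedIdeal.ker π := h ▸ trivial
  exact one_ne_zero ((map_one π).symm.trans ((TwoSidedIdeal.mem_ker π).1 hone))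

section Trace

theorem deltaOne_eq_single [DecidableEq G] : (deltaOne : ℓ²(G, ℂ)) = lp.single 2 1 1 := by
  unfold deltaOne
  congr
  exact Subsingleton.elim _ _

theorem norm_deltaOne : ‖(deltaOne : ℓ²(G, ℂ))‖ = 1 := by
  classical
  rw [deltaOne_eq_single, lp.norm_single (by norm_num), norm_one]

theorem tauF_uu [DecidableEq G] (g : G) : tauF G (uu g) = if g = 1 then 1 else 0 := by
  unfold tauF
  rw [coe_uu, deltaOne_eq_single, permutationRep_single, lp.inner_single_left, lp.coeFn_single,
    smul_eq_mul, mul_one, Pi.single_apply]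
  simp [eq_comm]

variable (G) in
/-- The canonical trace `tauF` as a continuous linear functional. -/
def canonicalTrace : redCstar G →L[ℂ] ℂ :=
  (innerSL ℂ deltaOne).comp
    ((ContinuousLinearMap.apply ℂ _ deltaOne).comp (redCstar G).toSubmodule.subtypeL)

theorem canonicalTrace_apply (a : redCstar G) : canonicalTrace G a = tauF G a := by
  unfold tauF
  rfl

theorem canonicalTrace_uu [DecidableEq G] (g : G) :
    canonicalTrace G (uu g) = if g = 1 then 1 else 0 :=
  (canonicalTrace_apply _).trans (tauF_uu g)

theorem isState_canonicalTrace : IsState (canonicalTrace G) where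
  map_one := by
    classical
    rw [← uu_one, canonicalTrace_uu, if_pos rfl]
  norm_apply_le a := by
    refine (norm_inner_le_norm (𝕜 := ℂ) deltaOne
      ((a : ℓ²(G, ℂ) →L[ℂ] ℓ²(G, ℂ)) deltaOne)).trans ?_
    rw [norm_deltaOne, one_mul]
    exact (ContinuousLinearMap.le_opNorm _ _).trans_eq (by rw [norm_deltaOne, mul_one]; rfl)

theorem conjAction_reducedRep_apply (g : G) (a : redCstar G) :
    conjAction (reducedRep G) g a = uu g * a * uu g⁻¹ := conjAction_apply _ _ _

theorem canonicalTrace_conjAction (g : G) (a : redCstar G) :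
    canonicalTrace G (conjAction (reducedRep G) g a) = canonicalTrace G a := by
  classical
  have hmul : (canonicalTrace G).comp ((ContinuousLinearMap.mul ℂ _ (uu g)).comp
      ((ContinuousLinearMap.mul ℂ _).flip (uu g⁻¹))) = canonicalTrace G :=
    ext_uu fun h => by
      change canonicalTrace G (uu g * (uu h * uu g⁻¹)) = _
      rw [← uu_mul, ← uu_mul, canonicalTrace_uu, canonicalTrace_uu, ← mul_assoc]
      simp only [conj_eq_one_iff]
  rw [conjAction_reducedRep_apply, mul_assoc]
  exact DFunLike.congr_fun hmul a

theorem canonicalTrace_star_mul_self (a : redCstar G) :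
    canonicalTrace G (star a * a)
      = (‖(a : ℓ²(G, ℂ) →L[ℂ] ℓ²(G, ℂ)) deltaOne‖ : ℂ) ^ 2 := by
  refine Eq.trans ?_ (inner_self_eq_norm_sq_to_K (𝕜 := ℂ)
    ((a : ℓ²(G, ℂ) →L[ℂ] ℓ²(G, ℂ)) deltaOne))
  change inner ℂ deltaOne (star (a : ℓ²(G, ℂ) →L[ℂ] ℓ²(G, ℂ))
    ((a : ℓ²(G, ℂ) →L[ℂ] ℓ²(G, ℂ)) deltaOne)) = _
  rw [ContinuousLinearMap.star_eq_adjoint, ContinuousLinearMap.adjoint_inner_right]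

theorem eq_zero_of_canonicalTrace_star_mul_self_eq_zero {a : redCstar G}
    (ha : canonicalTrace G (star a * a) = 0) : a = 0 := by
  classical
  have hg : ∀ g, (a : ℓ²(G, ℂ) →L[ℂ] ℓ²(G, ℂ)) (lp.single 2 g 1) = 0 := fun g => by
    have hconj : canonicalTrace G (star (a * uu g) * (a * uu g)) = 0 := by
      rw [← ha, ← canonicalTrace_conjAction g⁻¹ (star a * a), conjAction_reducedRep_apply,
        star_mul, star_uu, inv_inv]
      simp only [mul_assoc]
    rw [canonicalTrace_star_mul_self, sq_eq_zero_iff, Complex.ofReal_eq_zero, norm_eq_zero] at hconj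
    rw [← hconj]
    change _ = (a : ℓ²(G, ℂ) →L[ℂ] ℓ²(G, ℂ)) ((uu g : ℓ²(G, ℂ) →L[ℂ] ℓ²(G, ℂ)) deltaOne)
    rw [coe_uu, deltaOne_eq_single, permutationRep_single, smul_eq_mul, mul_one]
  exact Subtype.ext (lp.ext_continuousLinearMap (by norm_num) fun g =>
    ContinuousLinearMap.ext_ring (hg g))

end Trace

section StateFields

open Matrix
open scoped MatrixOrder Matrix.Norms.L2Operator

theorem exists_continuous_star_mul_self_eq {Y : Type*} [TopologicalSpace Y] {n : Type*}
    [Fintype n] {A : Y → Matrix n n ℂ} (hA : Continuous A) (hpos : ∀ y, (A y).PosSemidef) :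
    ∃ P : Matrix n n C(Y, ℂ), ∀ y, (star P * P).map (· y) = A y := by
  classical
  have hsqrt : Continuous fun y => CFC.sqrt (A y) := by
    have := CFC.continuousOn_sqrt (A := Matrix n n ℂ)
    exact this.comp_continuous hA fun y => nonneg_iff_posSemidef.2 (hpos y)
  refine ⟨of fun i j => ⟨fun y => CFC.sqrt (A y) i j, by fun_prop⟩, fun y => ?_⟩
  have hA_eq : star (CFC.sqrt (A y)) * CFC.sqrt (A y) = A y := by
    rw [(IsSelfAdjoint.of_nonneg (CFC.sqrt_nonneg (A y))).star_eq,
      CFC.sqrt_mul_sqrt_self (A y) (nonneg_iff_posSemidef.2 (hpos y))]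
  rw [← hA_eq]
  ext i j
  simp [mul_apply, star_apply]

theorem IsState.posSemidef_map {B : Type*} [CStarAlgebra B] {φ : B →L[ℂ] ℂ} (hφ : IsState φ)
    {n : Type*} [Fintype n] (N : Matrix n n B) : ((star N * N).map φ).PosSemidef := by
  have hquad : ∀ x : n → ℂ, star x ⬝ᵥ ((star N * N).map φ).mulVec x =
      ∑ k, φ (star (∑ j, x j • N k j) * (∑ j, x j • N k j)) := fun x => by
    simp only [dotProduct, mulVec, map_apply, mul_apply, star_apply, Pi.star_apply, map_sum,
      star_sum, Finset.sum_mul, Finset.mul_sum, star_smul, smul_mul_assoc, mul_smul_comm, map_smul,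
      smul_eq_mul]
    rw [Finset.sum_comm_cycle]
    refine Finset.sum_congr rfl fun k _ => ?_
    rw [Finset.sum_comm]
    refine Finset.sum_congr rfl fun i _ => Finset.sum_congr rfl fun j _ => ?_
    ring
  refine PosSemidef.of_dotProduct_mulVec_nonneg (IsHermitian.ext fun i j => ?_) fun x => ?_
  · have hN : star (star N * N) = star N * N := by rw [star_mul, star_star]
    rw [map_apply, map_apply, ← hN, star_apply, hφ.apply_star, star_star, hN]
  · rw [hquad]
    exact Finset.sum_nonneg fun k _ => hφ.apply_star_mul_self_nonneg _

variable {Y : Type u} [TopologicalSpace Y]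

theorem IsUCP.isState {Φ : redCstar G →L[ℂ] C(Y, ℂ)} (hΦ : IsUCP Φ) (y : Y) :
    IsState ((ContinuousMap.evalCLM ℂ y).comp Φ) := by
  refine isState_of_apply_star_mul_self_nonneg (DFunLike.congr_fun hΦ.1 y) fun b => ?_
  obtain ⟨P, hP⟩ := hΦ.2 1 (star (of fun _ _ => b) * of fun _ _ => b) ⟨_, rfl⟩
  have hentry : Φ (star b * b) = star (P 0 0) * P 0 0 := by
    simpa [mul_apply, star_apply] using congrFun (congrFun hP 0) 0
  change 0 ≤ Φ (star b * b) y
  rw [hentry]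
  exact star_mul_self_nonneg (P 0 0 y)

variable [MulAction G Y] {Φ : redCstar G →L[ℂ] C(Y, ℂ)}

theorem IsUCP.isEquivariantStateField (hΦ : IsUCP Φ) (hE : IsEquivariant Φ) :
    IsEquivariantStateField (conjAction (reducedRep G))
      fun y => (ContinuousMap.evalCLM ℂ y).comp Φ where
  isState := hΦ.isState
  continuous_apply a := (Φ a).continuous
  apply_smul g y a := by
    rw [conjAction_reducedRep_apply]
    exact (hE g a (g • y)).trans (by rw [inv_smul_smul]; rfl)

theorem IsEquivariantStateField.isUCP {α : G →* (redCstar G ≃⋆ₐ[ℂ] redCstar G)}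
    {q : Y → redCstar G →L[ℂ] ℂ} (hq : IsEquivariantStateField α q)
    (hΦ : ∀ a y, Φ a y = q y a) : IsUCP Φ := by
  refine ⟨ContinuousMap.ext fun y => (hΦ 1 y).trans (hq.isState y).map_one, ?_⟩
  rintro n M ⟨N, rfl⟩
  obtain ⟨P, hP⟩ := exists_continuous_star_mul_self_eq
    (A := fun y => (star N * N).map (q y))
    (continuous_matrix fun i j => hq.continuous_apply _) fun y => (hq.isState y).posSemidef_map N
  refine ⟨P, ?_⟩
  ext i j y
  exact (hΦ _ y).trans (congrFun (congrFun (hP y) i) j).symm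

theorem IsEquivariantStateField.exists_isUCP_isEquivariant [CompactSpace Y]
    {q : Y → redCstar G →L[ℂ] ℂ} (hq : IsEquivariantStateField (conjAction (reducedRep G)) q) :
    ∃ Φ : redCstar G →L[ℂ] C(Y, ℂ), IsUCP Φ ∧ IsEquivariant Φ ∧ ∀ a y, Φ a y = q y a := by
  let Φ : redCstar G →L[ℂ] C(Y, ℂ) := LinearMap.mkContinuous
    { toFun := fun a => ⟨fun y => q y a, hq.continuous_apply a⟩
      map_add' := fun a b => ContinuousMap.ext fun y => map_add (q y) a b
      map_smul' := fun c a => ContinuousMap.ext fun y => map_smul (q y) c a } 1 fun a => by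
        rw [one_mul]
        exact (ContinuousMap.norm_le _ (norm_nonneg a)).2 fun y => (hq.isState y).norm_apply_le a
  have hΦ : ∀ a y, Φ a y = q y a := fun _ _ => rfl
  refine ⟨Φ, hq.isUCP hΦ, fun g a y => ?_, hΦ⟩
  have hgy := hq.apply_smul g (g⁻¹ • y) a
  rwa [smul_inv_smul, conjAction_reducedRep_apply] at hgy

end StateFields

section OrbitRepresentation

open scoped CStarAlgebra

variable {Z : Type*} [MulAction G Z]

theorem IsState.norm_groupAlgebraHom_permutationRep_le [MulAction.IsPretransitive G Z]
    {φ : (ℓ²(G, ℂ) →L[ℂ] ℓ²(G, ℂ)) →L[ℂ] ℂ} (hφ : IsState φ) {z : Z}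
    (hφz : ∀ g ∈ MulAction.stabilizer G z, ∀ b, φ (conjAction (permutationRep G G) g b) = φ b)
    (a : MonoidAlgebra ℂ G) :
    ‖groupAlgebraHom (permutationRep G Z) a‖ ≤ ‖groupAlgebraHom (permutationRep G G) a‖ := by
  classical
  let m : ℓ^∞(G, ℂ) →L[ℂ] ℂ :=
    φ.comp ⟨(multiplicationRep G).toAlgHom.toLinearMap, map_continuous (multiplicationRep G)⟩
  have hm : IsState m := hφ.comp (multiplicationRep G) m fun _ => rfl
  have hcoeff : (fun g : G => (inner ℂ (lp.single 2 z 1 : ℓ²(Z, ℂ))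
      ((permutationRep G Z g : ℓ²(Z, ℂ) →L[ℂ] ℓ²(Z, ℂ)) (lp.single 2 z 1)) : ℂ))
        = (MulAction.stabilizer G z : Set G).indicator 1 := funext fun g => by
    rw [permutationRep_single, lp.inner_single_left, lp.coeFn_single, Pi.single_apply,
      Set.indicator_apply]
    simp [eq_comm]
  refine norm_groupAlgebraHom_le (denseRange_groupAlgebraHom_permutationRep_single z)
    (hcoeff ▸ hm.indicator_mem_closure fun h hh F K hK => ?_) a
  change φ (multiplicationRep G K) = φ (multiplicationRep G F)
  rw [← hφz h⁻¹ (inv_mem hh) (multiplicationRep G F),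
    conjAction_permutationRep_multiplicationRep h⁻¹ fun x => ?_]
  rw [inv_inv, hK, smul_eq_mul]

variable {Y : Type*} [TopologicalSpace Y] [CompactSpace Y] [T2Space Y] {j : Z → Y}

theorem IsState.apply_permutationRep_eq_one {φ : (ℓ²(Z, ℂ) →L[ℂ] ℓ²(Z, ℂ)) →L[ℂ] ℂ}
    (hφ : IsState φ) {y : Y} (h : ∀ f, φ (pullbackRep j f) = f y) {s : G}
    (hs : ∀ᶠ z in nhds y, ∀ x, j x = z → s • x = x) : φ (permutationRep G Z s) = 1 := by
  obtain ⟨W, hW, hWo, hyW⟩ := eventually_nhds_iff.1 hs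
  obtain ⟨f, hf0, hf1, -⟩ := exists_continuous_zero_one_of_isClosed hWo.isClosed_compl
    (isClosed_singleton (x := y)) (by simpa using hyW)
  let F : C(Y, ℂ) := Complex.ofRealCLM.compLeftContinuous ℝ Y f
  have hF : ContinuousMap.evalStarAlgHom ℂ ℂ y F = 1 := by simp [F, hf1 rfl]
  have hmul : pullbackRep j F * permutationRep G Z s = pullbackRep j F := by
    ext v x
    change F (j x) * v (s⁻¹ • x) = F (j x) * v x
    by_cases hx : j x ∈ W
    · rw [inv_smul_eq_iff.2 (hW _ hx x rfl).symm]
    · simp [F, hf0 hx]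
  calc φ (permutationRep G Z s) = φ (pullbackRep j F * permutationRep G Z s) := by
        rw [hφ.apply_mul_of_comp_eq' (χ := ContinuousMap.evalStarAlgHom ℂ ℂ y) h, hF, one_mul]
    _ = 1 := by rw [hmul, h]; exact hF

variable [MulAction G Y] [ContinuousConstSMul G Y]

theorem IsEquivariantStateField.apply_pullbackRep (hY : IsBoundary G Y)
    {q : Y → (ℓ²(Z, ℂ) →L[ℂ] ℓ²(Z, ℂ)) →L[ℂ] ℂ}
    (hq : IsEquivariantStateField (conjAction (permutationRep G Z)) q)
    (hj : ∀ (g : G) x, j (g • x) = g • j x) (y : Y) (f : C(Y, ℂ)) :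
    q y (pullbackRep j f) = f y := by
  let P : C(Y, ℂ) →L[ℂ] (ℓ²(Z, ℂ) →L[ℂ] ℓ²(Z, ℂ)) :=
    ⟨(pullbackRep j).toAlgHom.toLinearMap, map_continuous (pullbackRep j)⟩
  have hr : IsEquivariantStateField (translationAction G Y) fun y => (q y).comp P :=
    hq.comp (pullbackRep j) (fun g f => (conjAction_permutationRep_pullbackRep hj g f).symm)
      fun _ _ => rfl
  exact hr.apply_eq hY y f

end OrbitRepresentation

section Main

open scoped CStarAlgebra

variable {Y : Type u} [TopologicalSpace Y] [CompactSpace Y] [T2Space Y] [MulAction G Y]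
  [ContinuousConstSMul G Y]

theorem IsFurstenberg.exists_isEquivariantStateField_apply_eq_canonicalTrace
    (hY : IsFurstenberg G Y) (hG : IsCstarSimple G) {B : Type u} [CStarAlgebra B] [Nontrivial B]
    {V : G →* unitary B}
    (hV : ∀ a, ‖groupAlgebraHom V a‖ ≤ ‖groupAlgebraHom (permutationRep G G) a‖) :
    ∃ Q : Y → B →L[ℂ] ℂ, IsEquivariantStateField (conjAction V) Q ∧
      ∀ y g, Q y (V g) = canonicalTrace G (uu g) := by
  obtain ⟨π, hπ⟩ := exists_starAlgHom_apply_uu_eq hV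
  have hπG : ∀ g a, π (conjAction (reducedRep G) g a) = conjAction V g (π a) := fun g a => by
    rw [conjAction_reducedRep_apply, map_mul, map_mul, hπ, hπ, conjAction_apply]
  have htrace : IsEquivariantStateField (conjAction (reducedRep G)) fun _ : Y => canonicalTrace G :=
    ⟨fun _ => isState_canonicalTrace, fun _ => continuous_const,
      fun g _ a => canonicalTrace_conjAction g a⟩
  obtain ⟨Q, hQ, hQπ⟩ :=
    hY.exists_isEquivariantStateField_comp_eq (hG.injective (map_continuous π)) hπG htrace
  exact ⟨Q, hQ, fun y g => by rw [← hπ, hQπ]⟩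

theorem IsCstarSimple.apply_uu_eq_zero (hG : IsCstarSimple G) (hY : IsFurstenberg G Y)
    {Φ : redCstar G →L[ℂ] C(Y, ℂ)} (hΦ : IsUCP Φ) (hE : IsEquivariant Φ) {s : G} (hs : s ≠ 1)
    (y : Y) : Φ (uu s) y = 0 := by
  classical
  by_contra hne
  obtain ⟨ψ, hψ, hψΦ⟩ := hY.exists_isEquivariantStateField_comp_eq
    (α := conjAction (permutationRep G G)) (ι := (redCstar G).subtype) Subtype.val_injective
    (fun g a => by
      rw [conjAction_reducedRep_apply, conjAction_apply, ← coe_uu, ← coe_uu]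
      rfl) (hΦ.isEquivariantStateField hE)
  have hfix : ∀ z, Φ (uu s) z ≠ 0 → s • z = z := fun z hz => by
    by_contra hsz
    have hj : ∀ g x : G, (g • x) • y = g • x • y := fun g x => smul_assoc g x y
    refine hz ((hψΦ z (uu s)).symm.trans ((congrArg (ψ z) (coe_uu s)).trans ?_))
    exact (hψ.isState z).apply_unitary_eq_zero (conjAction_permutationRep_pullbackRep hj)
      (hψ.apply_pullbackRep (j := (· • y)) hY.1 hj z) hsz
  let z : MulAction.orbit G y := ⟨y, MulAction.mem_orbit_self y⟩
  have hstab : ∀ g ∈ MulAction.stabilizer G z, ∀ b,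
      ψ y (conjAction (permutationRep G G) g b) = ψ y b := fun g hg b => by
    have hgy : g • y = y := congrArg Subtype.val hg
    simpa only [hgy] using hψ.apply_smul g y b
  have : Nontrivial ℓ²(MulAction.orbit G y, ℂ) :=
    ⟨lp.single 2 z 1, 0, fun h => one_ne_zero (α := ℂ) <| by
      simpa using congrArg (fun v : ℓ²(MulAction.orbit G y, ℂ) => v z) h⟩
  obtain ⟨Q, hQ, hQV⟩ := hY.exists_isEquivariantStateField_apply_eq_canonicalTrace hG
    ((hψ.isState y).norm_groupAlgebraHom_permutationRep_le hstab)
  have hone : Q y (permutationRep G (MulAction.orbit G y) s) = 1 :=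
    (hQ.isState y).apply_permutationRep_eq_one
      (hQ.apply_pullbackRep hY.1 (j := Subtype.val) (fun _ _ => rfl) y)
      (((Φ (uu s)).continuous.continuousAt.eventually_ne hne).mono
        fun _ hz x hx => Subtype.ext ((congrArg (s • ·) hx).trans ((hfix _ hz).trans hx.symm)))
  rw [hQV, canonicalTrace_uu, if_neg hs] at hone
  exact zero_ne_one hone

theorem IsCstarSimple.apply_eq_tauF (hG : IsCstarSimple G) (hY : IsFurstenberg G Y)
    {Φ : redCstar G →L[ℂ] C(Y, ℂ)} (hΦ : IsUCP Φ) (hE : IsEquivariant Φ) (a : redCstar G) (y : Y) :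
    Φ a y = tauF G a := by
  classical
  have heq : (ContinuousMap.evalCLM ℂ y).comp Φ = canonicalTrace G := ext_uu fun g => by
    change Φ (uu g) y = _
    rw [canonicalTrace_uu]
    split_ifs with hg
    · rw [hg, uu_one, hΦ.1, ContinuousMap.one_apply]
    · exact hG.apply_uu_eq_zero hY hΦ hE hg y
  rw [← canonicalTrace_apply, ← heq]
  rfl

theorem isCstarSimple_of_forall_apply_eq_tauF (hY : IsFurstenberg G Y)
    (h : ∀ Φ : redCstar G →L[ℂ] C(Y, ℂ), IsUCP Φ → IsEquivariant Φ → ∀ a y, Φ a y = tauF G a) :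
    IsCstarSimple G := fun I _ => or_iff_not_imp_right.2 fun hI => by
  obtain ⟨φ, hφ, hφI⟩ := exists_isState_forall_mem_eq_zero I hI
  obtain ⟨q, hq, hqI⟩ := hY.exists_isEquivariantStateField (conjAction (reducedRep G))
    (S := (I : Set (redCstar G)))
    (fun g a ha => by
      rw [conjAction_reducedRep_apply]
      exact I.mul_mem_right _ _ (I.mul_mem_left _ _ ha)) hφ hφI
  obtain ⟨Φ, hΦ, hE, hΦq⟩ := hq.exists_isUCP_isEquivariant
  obtain ⟨y⟩ := hY.1.1
  refine eq_bot_iff.2 fun a ha => (TwoSidedIdeal.mem_bot _).2 <|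
    eq_zero_of_canonicalTrace_star_mul_self_eq_zero ?_
  rw [canonicalTrace_apply, ← h Φ hΦ hE _ y, hΦq, hqI y _ (I.mul_mem_left _ _ ha)]

end Main

end ReducedGroupCStarAlgebra

/-- A discrete group is C*-simple if and only if the only `G`-equivariant u.c.p. map
`C*_λ(G) → C(∂_F G)` is the one given by the canonical trace. -/
theorem cstarSimple_iff_unique_equivariant_ucp (G : Type u) [Group G] (Y : Type u)
    [TopologicalSpace Y] [CompactSpace Y] [T2Space Y] [MulAction G Y] [ContinuousConstSMul G Y]
    (hY : IsFurstenberg G Y) :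
    IsCstarSimple G ↔
      ∀ Φ : redCstar G →L[ℂ] C(Y, ℂ), IsUCP Φ → IsEquivariant Φ →
        ∀ (a : redCstar G) (x : Y), Φ a x = tauF G a :=
  ⟨fun hG _ hΦ hE => hG.apply_eq_tauF hY hΦ hE, isCstarSimple_of_forall_apply_eq_tauF hY⟩
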